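/- Let $n\geq 1$, $s\in(0,1)$, $e\in\partial B_1\subset\mathbb{R}^n$, $\omega\in\partial B_1$ and $\varepsilon_o>0$ be such that $e+\varepsilon\omega\in B_1$ for all $\varepsilon\in(0,\varepsilon_o]$. Let $\alpha\in(0,1)$ and $f\in C^\alpha(\mathbb{R}^n)$ with $f=0$ outside $B_1$. Let $u\in C(\mathbb{R}^n)$ satisfy $u=0$ in $\mathbb{R}^n\setminus B_1$ and $(-\Delta)^s u(x)=f(x)$ for every $x\in B_1$ (the principal-value integral converging for every $x\in B_1$). Then $\lim_{\varepsilon\searrow0}\varepsilon^{-s}\,u(e+\varepsilon\omega)=\kappa(n,s)\,(-2\,e\cdot\omega)^s\int_{B_1}f(z)\,\frac{(1-|z|^2)^s}{s\,|z-e|^n}\,dz$, where $\kappa(n,s)=\frac{\Gamma(n/2)}{4^s\pi^{n/2}\Gamma(s)^2}$. -/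

import Mathlib

open MeasureTheory Filter Metric Set
open scoped RealInnerProductSpace

/-- The normalizing constant `C(n,s)` of the fractional Laplacian. -/
noncomputable def fracC (n : ℕ) (s : ℝ) : ℝ :=
  4 ^ s * s * Real.Gamma ((n : ℝ) / 2 + s) / (Real.pi ^ ((n : ℝ) / 2) * Real.Gamma (1 - s))

/-- `HasFracLap n s u x L` : the principal value limit defining `(-Δ)^s u (x)`
exists and equals `L`. -/
def HasFracLap (n : ℕ) (s : ℝ) (u : EuclideanSpace ℝ (Fin n) → ℝ)
    (x : EuclideanSpace ℝ (Fin n)) (L : ℝ) : Prop :=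
  Tendsto (fun ρ : ℝ =>
      fracC n s * ∫ y in {y : EuclideanSpace ℝ (Fin n) | ρ ≤ ‖y‖},
        (u x - u (x + y)) / ‖y‖ ^ ((n : ℝ) + 2 * s))
    (nhdsWithin 0 (Set.Ioi 0)) (nhds L)

/-- The constant `κ(n,s) = Γ(n/2) / (4^s π^{n/2} Γ(s)²)`. -/
noncomputable def kappaC (n : ℕ) (s : ℝ) : ℝ :=
  Real.Gamma ((n : ℝ) / 2) / (4 ^ s * Real.pi ^ ((n : ℝ) / 2) * Real.Gamma s ^ 2)

/-!
For a pole `a` outside the closed ball, `(1 - |x|²)₊ ^ s |x - a| ^ (-n)` has an explicit fractional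
Laplacian in the ball, a constant multiple of `|x - a| ^ (-n - 2 * s)`: inverting around the point
of evaluation turns the truncated integral into a difference of two radial moments over a large
ball. The inversion around `a` that preserves the unit ball evaluates the boundary integral of that
right-hand side, so the asymptotics can be read off for every such pole. The functions
`|x - a| ^ (-n - 2 * s)` span a uniformly dense subspace of the continuous functions on the closed
ball, and comparison with a barrier bounds `|u|` by a multiple of `sup |f| (1 - |x|²)₊ ^ s`. Hence
both sides of the limit pass from the poles to an arbitrary continuous `f`.
-/

open EuclideanGeometry Module
open scoped ENNReal Topology

section Polar

variable {E : Type*} [NormedAddCommGroup E] [InnerProductSpace ℝ E] [FiniteDimensional ℝ E]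
  [MeasurableSpace E] [BorelSpace E] [Nontrivial E]

theorem lintegral_eq_lintegral_sphere_lintegral_Ioi {g : E → ℝ≥0∞} (hg : Measurable g) :
    ∫⁻ x, g x = ∫⁻ θ : sphere (0 : E) 1, (∫⁻ t in Ioi (0 : ℝ),
      ENNReal.ofReal (t ^ (finrank ℝ E - 1)) * g (t • (θ : E)))
        ∂(volume : Measure E).toSphere := by
  have off_zero : ∫⁻ x, g x =
      ∫⁻ x : ({(0 : E)}ᶜ : Set E), g x ∂((volume : Measure E).comap (↑)) := by
    rw [lintegral_subtype_comap (measurableSet_singleton _).compl, restrict_compl_singleton]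
  have polar : ∀ x : ({(0 : E)}ᶜ : Set E), g x =
      (fun q : sphere (0 : E) 1 × Ioi (0 : ℝ) => g (q.2.1 • (q.1 : E)))
        (homeomorphUnitSphereProd E x) := by
    intro x
    have hx : ‖(x : E)‖ ≠ 0 := norm_ne_zero_iff.2 x.2
    simp [smul_smul, hx]
  have hm : Measurable (fun q : sphere (0 : E) 1 × Ioi (0 : ℝ) => g (q.2.1 • (q.1 : E))) := by
    fun_prop
  rw [off_zero, lintegral_congr polar,
    (volume : Measure E).measurePreserving_homeomorphUnitSphereProd.lintegral_comp hm,
    lintegral_prod _ hm.aemeasurable]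
  refine lintegral_congr fun θ => ?_
  rw [Measure.volumeIoiPow, lintegral_withDensity_eq_lintegral_mul _ (by fun_prop) (by fun_prop)]
  simp only [Pi.mul_apply]
  rw [lintegral_subtype_comap measurableSet_Ioi
    (fun t : ℝ => ENNReal.ofReal (t ^ (finrank ℝ E - 1)) * g (t • (θ : E)))]

theorem two_mul_lintegral_eq_lintegral_sphere {g : E → ℝ≥0∞} (hg : Measurable g) :
    2 * ∫⁻ x, g x = ∫⁻ θ : sphere (0 : E) 1, (∫⁻ t in Ioi (0 : ℝ),
      ENNReal.ofReal (t ^ (finrank ℝ E - 1)) * (g (t • (θ : E)) + g (-(t • (θ : E)))))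
        ∂(volume : Measure E).toSphere := by
  have symm : 2 * ∫⁻ x, g x = ∫⁻ x, (g x + g (-x)) := by
    rw [lintegral_add_left hg, two_mul, lintegral_neg_eq_self (μ := (volume : Measure E)) g]
  rw [symm, lintegral_eq_lintegral_sphere_lintegral_Ioi (by fun_prop)]

theorem two_mul_lintegral_le_of_forall_dir {g : E → ℝ≥0∞} (hg : Measurable g)
    {C : ℝ≥0∞} (h : ∀ θ : E, ‖θ‖ = 1 → ∫⁻ t in Ioi (0 : ℝ),
      ENNReal.ofReal (t ^ (finrank ℝ E - 1)) * (g (t • θ) + g (-(t • θ))) ≤ C) :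
    2 * ∫⁻ x, g x ≤ C * (volume : Measure E).toSphere univ := by
  rw [two_mul_lintegral_eq_lintegral_sphere hg, ← lintegral_const]
  exact lintegral_mono fun θ => h θ (norm_eq_of_mem_sphere θ)

theorem le_two_mul_lintegral_of_forall_dir {g : E → ℝ≥0∞} (hg : Measurable g)
    {C : ℝ≥0∞} (h : ∀ θ : E, ‖θ‖ = 1 → C ≤ ∫⁻ t in Ioi (0 : ℝ),
      ENNReal.ofReal (t ^ (finrank ℝ E - 1)) * (g (t • θ) + g (-(t • θ)))) :
    C * (volume : Measure E).toSphere univ ≤ 2 * ∫⁻ x, g x := by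
  rw [two_mul_lintegral_eq_lintegral_sphere hg, ← lintegral_const]
  exact lintegral_mono fun θ => h θ (norm_eq_of_mem_sphere θ)

end Polar

/-- The larger root `t` of `t ^ 2 + 2 * β * t = y`, the positive one when `0 < y`. It parametrizes
the squared distance to a point `p` along the two directions of a line through a second point. -/
noncomputable def quadRoot (β y : ℝ) : ℝ := √(β ^ 2 + y) - β

section QuadRoot

variable {β y t : ℝ}

theorem quadRoot_sq_add (hy : 0 ≤ β ^ 2 + y) :
    quadRoot β y ^ 2 + 2 * β * quadRoot β y = y := by
  rw [quadRoot]
  linear_combination Real.sq_sqrt hy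

theorem quadRoot_mul_quadRoot_neg (hy : 0 ≤ β ^ 2 + y) :
    quadRoot β y * quadRoot (-β) y = y := by
  rw [quadRoot, quadRoot, neg_sq]
  linear_combination Real.sq_sqrt hy

theorem quadRoot_add_quadRoot_neg (β y : ℝ) :
    quadRoot β y + quadRoot (-β) y = 2 * √(β ^ 2 + y) := by
  rw [quadRoot, quadRoot, neg_sq]
  ring

theorem quadRoot_pos (hy : 0 < y) : 0 < quadRoot β y :=
  sub_pos.2 (Real.lt_sqrt_of_sq_lt (by linarith))

theorem quadRoot_eq (h : 0 ≤ t + β) : quadRoot β (t ^ 2 + 2 * β * t) = t := by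
  rw [quadRoot, show β ^ 2 + (t ^ 2 + 2 * β * t) = (t + β) ^ 2 by ring, Real.sqrt_sq h,
    add_sub_cancel_right]

theorem le_quadRoot_iff (ht : 0 ≤ t) (hy : 0 < y) :
    t ≤ quadRoot β y ↔ t ^ 2 + 2 * β * t ≤ y := by
  have root := quadRoot_sq_add (β := β) (y := y) (by positivity)
  have mul_pos : 0 < quadRoot β y * (quadRoot β y + 2 * β) := by linarith
  have pos : 0 < t + quadRoot β y + 2 * β := by
    linarith [(mul_pos_iff_of_pos_left (quadRoot_pos hy)).1 mul_pos]
  rw [← sub_nonneg, ← mul_nonneg_iff_of_pos_right pos, ← sub_nonneg (b := _ + _)]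
  congr! 1
  linear_combination root

theorem hasDerivAt_quadRoot (hy : β ^ 2 + y ≠ 0) :
    HasDerivAt (quadRoot β) (1 / (2 * √(β ^ 2 + y))) y :=
  (((hasDerivAt_id y).const_add (β ^ 2)).sqrt hy).sub_const β

theorem injOn_quadRoot (β : ℝ) : InjOn (quadRoot β) (Ioi 0) := by
  intro y hy z hz h
  rw [← quadRoot_sq_add (β := β) (add_pos_of_nonneg_of_pos (sq_nonneg _) hy).le,
    ← quadRoot_sq_add (β := β) (add_pos_of_nonneg_of_pos (sq_nonneg _) hz).le, h]

theorem image_quadRoot (β : ℝ) :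
    quadRoot β '' Ioi 0 = {t | 0 < t ^ 2 + 2 * β * t} ∩ Ioi 0 := by
  ext t
  constructor
  · rintro ⟨y, hy, rfl⟩
    have hy : 0 < y := hy
    exact ⟨hy.trans_eq (quadRoot_sq_add (by positivity)).symm, quadRoot_pos hy⟩
  · rintro ⟨hq, ht⟩
    have hq : 0 < t ^ 2 + 2 * β * t := hq
    have ht : 0 < t := ht
    exact ⟨_, hq, quadRoot_eq (by nlinarith)⟩

theorem lintegral_inv_mul_comp_quadratic (β : ℝ) {H : ℝ → ℝ≥0∞} (hH : ∀ y ≤ 0, H y = 0) :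
    ∫⁻ t in Ioi (0 : ℝ), ENNReal.ofReal (1 / t) * H (t ^ 2 + 2 * β * t) =
      ∫⁻ y in Ioi (0 : ℝ),
        ENNReal.ofReal (1 / (2 * √(β ^ 2 + y)) * (1 / quadRoot β y)) * H y := by
  have hmeas : MeasurableSet {t : ℝ | 0 < t ^ 2 + 2 * β * t} :=
    measurableSet_lt measurable_const (by fun_prop)
  have restrict_image : ∫⁻ t in Ioi (0 : ℝ), ENNReal.ofReal (1 / t) * H (t ^ 2 + 2 * β * t) =
      ∫⁻ t in quadRoot β '' Ioi 0, ENNReal.ofReal (1 / t) * H (t ^ 2 + 2 * β * t) := by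
    rw [image_quadRoot, ← Measure.restrict_restrict hmeas, ← lintegral_indicator hmeas]
    refine lintegral_congr fun t => ?_
    by_cases ht : 0 < t ^ 2 + 2 * β * t
    · rw [indicator_of_mem (by exact ht)]
    · rw [indicator_of_notMem (by exact ht), hH _ (not_lt.1 ht), mul_zero]
  rw [restrict_image, lintegral_image_eq_lintegral_abs_deriv_mul measurableSet_Ioi
    (fun y hy => (hasDerivAt_quadRoot
      (add_pos_of_nonneg_of_pos (sq_nonneg β) hy).ne').hasDerivWithinAt) (injOn_quadRoot β)]
  refine setLIntegral_congr_fun measurableSet_Ioi fun y (hy : 0 < y) => ?_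
  rw [quadRoot_sq_add (by positivity), ← mul_assoc, ← ENNReal.ofReal_mul (abs_nonneg _),
    abs_of_pos (by positivity)]

/-- Both directions of a line through the pole contribute: the sum of the two densities
`1 / (2 * √(β ^ 2 + y) * quadRoot (±β) y)` does not depend on `β`. -/
theorem lintegral_inv_mul_comp_quadratic_add (β : ℝ) {H : ℝ → ℝ≥0∞} (hHm : Measurable H)
    (hH : ∀ y ≤ 0, H y = 0) :
    ∫⁻ t in Ioi (0 : ℝ), ENNReal.ofReal (1 / t) *
        (H (t ^ 2 + 2 * β * t) + H (t ^ 2 + 2 * -β * t)) =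
      ∫⁻ y in Ioi (0 : ℝ), ENNReal.ofReal (1 / y) * H y := by
  simp only [mul_add]
  have hq : ∀ β, Measurable (quadRoot β) := fun β => by unfold quadRoot; fun_prop
  rw [lintegral_add_left (by fun_prop), lintegral_inv_mul_comp_quadratic β hH,
    lintegral_inv_mul_comp_quadratic (-β) hH, ← lintegral_add_left (by fun_prop)]
  refine setLIntegral_congr_fun measurableSet_Ioi fun y (hy : 0 < y) => ?_
  have h₁ : 0 < quadRoot β y := quadRoot_pos hy
  have h₂ : 0 < quadRoot (-β) y := quadRoot_pos hy
  have : 0 < √(β ^ 2 + y) := by positivity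
  rw [← add_mul, neg_sq, ← ENNReal.ofReal_add (by positivity) (by positivity), ← mul_add,
    div_add_div _ _ h₁.ne' h₂.ne', quadRoot_mul_quadRoot_neg (by positivity), one_mul, mul_one,
    add_comm (quadRoot (-β) y), quadRoot_add_quadRoot_neg, ← mul_div_assoc,
    one_div_mul_cancel (by positivity)]

end QuadRoot

section Pole

variable {E : Type*} [NormedAddCommGroup E] [InnerProductSpace ℝ E]

theorem norm_smul_add_sq {θ : E} (hθ : ‖θ‖ = 1) (t : ℝ) (b : E) :
    ‖t • θ + b‖ ^ 2 = ‖b‖ ^ 2 + (t ^ 2 + 2 * ⟪b, θ⟫ * t) := by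
  rw [norm_add_sq_real, norm_smul, hθ, inner_smul_left, real_inner_comm, Real.norm_eq_abs, mul_one,
    sq_abs, RCLike.conj_to_real]
  ring

theorem norm_neg_smul_add_sq {θ : E} (hθ : ‖θ‖ = 1) (t : ℝ) (b : E) :
    ‖-(t • θ) + b‖ ^ 2 = ‖b‖ ^ 2 + (t ^ 2 + 2 * -⟪b, θ⟫ * t) := by
  rw [← smul_neg, norm_smul_add_sq (by rwa [norm_neg]), inner_neg_right]

theorem pow_pred_mul_rpow {d : ℕ} (hd : 0 < d) {t : ℝ} (ht : 0 < t) (q : ℝ) :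
    t ^ (d - 1) * t ^ (q - d) = t ^ (q - 1) := by
  rw [← Real.rpow_natCast, ← Real.rpow_add ht, Nat.cast_pred hd]
  congr 1
  ring

variable [FiniteDimensional ℝ E] [MeasurableSpace E] [BorelSpace E] [Nontrivial E]

theorem two_mul_lintegral_radial_mul_pole (p c : E) {F : ℝ → ℝ≥0∞}
    (hFm : Measurable F) (hF : ∀ v ≤ ‖c - p‖ ^ 2, F v = 0) :
    2 * ∫⁻ ζ : E, F (‖ζ - p‖ ^ 2) * ENNReal.ofReal (‖ζ - c‖ ^ (-(finrank ℝ E : ℝ))) =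
      (∫⁻ y in Ioi (0 : ℝ), ENNReal.ofReal (1 / y) * F (‖c - p‖ ^ 2 + y)) *
        (volume : Measure E).toSphere univ := by
  set b := c - p
  set g : E → ℝ≥0∞ :=
    fun x => F (‖x + b‖ ^ 2) * ENNReal.ofReal (‖x‖ ^ (-(finrank ℝ E : ℝ))) with hg
  have hgm : Measurable g := by fun_prop
  have translate : ∫⁻ ζ : E, F (‖ζ - p‖ ^ 2) *
      ENNReal.ofReal (‖ζ - c‖ ^ (-(finrank ℝ E : ℝ))) = ∫⁻ x, g x := by
    rw [← lintegral_sub_right_eq_self (μ := (volume : Measure E)) g c]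
    simp only [hg, b, sub_add_sub_cancel]
  have along_dir : ∀ θ : E, ‖θ‖ = 1 → ∫⁻ t in Ioi (0 : ℝ),
      ENNReal.ofReal (t ^ (finrank ℝ E - 1)) * (g (t • θ) + g (-(t • θ))) =
      ∫⁻ y in Ioi (0 : ℝ), ENNReal.ofReal (1 / y) * F (‖b‖ ^ 2 + y) := by
    intro θ hθ
    rw [← lintegral_inv_mul_comp_quadratic_add ⟪b, θ⟫ (H := fun y => F (‖b‖ ^ 2 + y))
      (by fun_prop) (fun y hy => hF _ (by linarith))]
    refine setLIntegral_congr_fun measurableSet_Ioi fun t (ht : 0 < t) => ?_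
    have norm_smul_dir : ‖t • θ‖ = t := by rw [norm_smul, hθ, mul_one, Real.norm_of_nonneg ht.le]
    have polar_weight : t ^ (finrank ℝ E - 1) * t ^ (-(finrank ℝ E : ℝ)) = 1 / t := by
      simpa [Real.rpow_neg_one] using pow_pred_mul_rpow (finrank_pos (R := ℝ) (M := E)) ht 0
    simp only [hg]
    rw [norm_smul_add_sq hθ, norm_neg_smul_add_sq hθ, norm_neg, norm_smul_dir, ← add_mul,
      mul_left_comm, ← ENNReal.ofReal_mul (by positivity),
      polar_weight, mul_comm]
  rw [translate]
  exact le_antisymm (two_mul_lintegral_le_of_forall_dir hgm fun θ hθ => (along_dir θ hθ).le)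
    (le_two_mul_lintegral_of_forall_dir hgm fun θ hθ => (along_dir θ hθ).ge)

/-- The variable `t` on the right is the squared distance to `p` in excess of `r ^ 2`. -/
theorem two_mul_lintegral_excess_mul_pole {p c : E} {r : ℝ} (hcr : ‖c - p‖ ^ 2 < r ^ 2)
    {G : ℝ → ℝ≥0∞} (hGm : Measurable G) (hG : ∀ t ≤ 0, G t = 0) :
    2 * ∫⁻ ζ : E, G (‖ζ - p‖ ^ 2 - r ^ 2) * ENNReal.ofReal (‖ζ - c‖ ^ (-(finrank ℝ E : ℝ))) =
      (∫⁻ t in Ioi (0 : ℝ), ENNReal.ofReal (1 / (t + (r ^ 2 - ‖c - p‖ ^ 2))) * G t) *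
        (volume : Measure E).toSphere univ := by
  rw [two_mul_lintegral_radial_mul_pole p c (F := fun v => G (v - r ^ 2)) (by fun_prop)
    fun v hv => hG _ (by linarith)]
  congr 1
  set δ := r ^ 2 - ‖c - p‖ ^ 2 with hδ
  rw [← lintegral_indicator measurableSet_Ioi, ← lintegral_indicator measurableSet_Ioi,
    ← lintegral_add_right_eq_self _ δ]
  refine lintegral_congr fun t => ?_
  have excess : ‖c - p‖ ^ 2 + (t + δ) - r ^ 2 = t := by rw [hδ]; ring
  rcases le_or_gt t 0 with ht | ht
  · simp only [indicator_apply, excess, hG t ht, mul_zero, ite_self]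
  · rw [indicator_of_mem (mem_Ioi.2 (by linarith)), indicator_of_mem (mem_Ioi.2 ht), excess]

end Pole

section Beta

variable {a b r s δ : ℝ}

theorem lintegral_rpow_mul_exp_neg (ha : 0 < a) (hr : 0 < r) :
    ∫⁻ t in Ioi (0 : ℝ), ENNReal.ofReal (t ^ (a - 1) * Real.exp (-(r * t))) =
      ENNReal.ofReal (Real.Gamma a * r ^ (-a)) := by
  have hi : IntegrableOn (fun t : ℝ => t ^ (a - 1) * Real.exp (-(r * t))) (Ioi 0) := by
    simpa using integrableOn_rpow_mul_exp_neg_mul_rpow (s := a - 1) (p := 1) (by linarith)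
      one_pos hr
  rw [← ofReal_integral_eq_lintegral_ofReal hi
    ((ae_restrict_mem measurableSet_Ioi).mono fun t (ht : 0 < t) => by positivity),
    Real.integral_rpow_mul_exp_neg_mul_Ioi ha hr, one_div, Real.inv_rpow hr.le,
    Real.rpow_neg hr.le, mul_comm]

/-- Euler's Beta integral over the half line, by integrating
`y ^ (a - 1) * t ^ (a + b - 1) * exp (-(y + r) * t)` in both orders. -/
theorem lintegral_rpow_mul_add_rpow (ha : 0 < a) (hb : 0 < b) (hr : 0 < r) :
    ∫⁻ y in Ioi (0 : ℝ), ENNReal.ofReal (y ^ (a - 1) * (y + r) ^ (-(a + b))) =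
      ENNReal.ofReal (Real.Gamma a * Real.Gamma b / Real.Gamma (a + b) * r ^ (-b)) := by
  have hΓ : 0 < Real.Gamma (a + b) := Real.Gamma_pos_of_pos (by linarith)
  have hΓa : 0 < Real.Gamma a := Real.Gamma_pos_of_pos ha
  set k : ℝ → ℝ → ℝ≥0∞ := fun y t => ENNReal.ofReal (y ^ (a - 1)) *
    ENNReal.ofReal (t ^ (a + b - 1) * Real.exp (-((y + r) * t))) with hk
  have integral_t : ∀ y ∈ Ioi (0 : ℝ), ∫⁻ t in Ioi (0 : ℝ), k y t =
      ENNReal.ofReal (Real.Gamma (a + b)) *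
        ENNReal.ofReal (y ^ (a - 1) * (y + r) ^ (-(a + b))) := by
    intro y (hy : 0 < y)
    rw [lintegral_const_mul _ (by fun_prop), lintegral_rpow_mul_exp_neg (by linarith)
      (by linarith), ← ENNReal.ofReal_mul (by positivity), ← ENNReal.ofReal_mul hΓ.le,
      mul_left_comm]
  have integral_y : ∀ t ∈ Ioi (0 : ℝ), ∫⁻ y in Ioi (0 : ℝ), k y t =
      ENNReal.ofReal (Real.Gamma a) * ENNReal.ofReal (t ^ (b - 1) * Real.exp (-(r * t))) := by
    intro t (ht : 0 < t)
    have factor : ∀ y ∈ Ioi (0 : ℝ), k y t = ENNReal.ofReal (t ^ (a + b - 1) *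
        Real.exp (-(r * t))) * ENNReal.ofReal (y ^ (a - 1) * Real.exp (-(t * y))) := by
      intro y (hy : 0 < y)
      simp only [hk]
      rw [← ENNReal.ofReal_mul (by positivity), ← ENNReal.ofReal_mul (by positivity),
        show -((y + r) * t) = -(r * t) + -(t * y) by ring, Real.exp_add]
      ring_nf
    rw [setLIntegral_congr_fun measurableSet_Ioi factor, lintegral_const_mul _ (by fun_prop),
      lintegral_rpow_mul_exp_neg ha ht, ← ENNReal.ofReal_mul (by positivity),
      ← ENNReal.ofReal_mul hΓa.le, show b - 1 = a + b - 1 + -a by ring, Real.rpow_add ht]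
    ring_nf
  have fubini : ENNReal.ofReal (Real.Gamma (a + b)) *
      ∫⁻ y in Ioi (0 : ℝ), ENNReal.ofReal (y ^ (a - 1) * (y + r) ^ (-(a + b))) =
      ENNReal.ofReal (Real.Gamma a * (Real.Gamma b * r ^ (-b))) := by
    rw [← lintegral_const_mul _ (by fun_prop), ← setLIntegral_congr_fun measurableSet_Ioi
      integral_t, lintegral_lintegral_swap (by fun_prop), setLIntegral_congr_fun measurableSet_Ioi
      integral_y, lintegral_const_mul _ (by fun_prop), lintegral_rpow_mul_exp_neg hb hr,
      ← ENNReal.ofReal_mul hΓa.le]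
  rw [div_mul_eq_mul_div, mul_assoc, ENNReal.ofReal_div_of_pos hΓ, ← fubini, mul_comm,
    ENNReal.mul_div_cancel_right (by simpa using hΓ) ENNReal.ofReal_ne_top]

theorem rpow_mul_add_rpow_nonneg_ae (hr : 0 < r) :
    0 ≤ᵐ[volume.restrict (Ioi (0 : ℝ))] fun y : ℝ => y ^ a * (y + r) ^ b :=
  (ae_restrict_mem measurableSet_Ioi).mono fun y (hy : 0 < y) => by
    simp only [Pi.zero_apply]
    positivity

theorem integrableOn_rpow_mul_add_rpow (ha : 0 < a) (hb : 0 < b) (hr : 0 < r) :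
    IntegrableOn (fun y : ℝ => y ^ (a - 1) * (y + r) ^ (-(a + b))) (Ioi 0) := by
  refine ⟨Measurable.aestronglyMeasurable (by fun_prop), ?_⟩
  rw [hasFiniteIntegral_iff_ofReal (rpow_mul_add_rpow_nonneg_ae hr),
    lintegral_rpow_mul_add_rpow ha hb hr]
  exact ENNReal.ofReal_lt_top

theorem integral_rpow_mul_add_rpow (ha : 0 < a) (hb : 0 < b) (hr : 0 < r) :
    ∫ y in Ioi (0 : ℝ), y ^ (a - 1) * (y + r) ^ (-(a + b)) =
      Real.Gamma a * Real.Gamma b / Real.Gamma (a + b) * r ^ (-b) := by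
  have := Real.Gamma_pos_of_pos ha
  have := Real.Gamma_pos_of_pos hb
  have := Real.Gamma_pos_of_pos (add_pos ha hb)
  rw [integral_eq_lintegral_of_nonneg_ae (rpow_mul_add_rpow_nonneg_ae hr)
    (Measurable.aestronglyMeasurable (by fun_prop)), lintegral_rpow_mul_add_rpow ha hb hr,
    ENNReal.toReal_ofReal (by positivity)]

theorem intervalIntegral_rpow_div_add (hs : s ∈ Ioo (0 : ℝ) 1) (hδ : 0 < δ) {T : ℝ}
    (hT : 0 ≤ T) :
    ∫ t in (0 : ℝ)..T, t ^ s / (t + δ) =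
      T ^ s / s - δ * ∫ t in (0 : ℝ)..T, t ^ (s - 1) * (t + δ) ^ (-(s + (1 - s))) := by
  have power : IntervalIntegrable (fun t : ℝ => t ^ (s - 1)) volume 0 T :=
    intervalIntegral.intervalIntegrable_rpow' (by linarith [hs.1])
  have tail : IntervalIntegrable (fun t : ℝ => δ * (t ^ (s - 1) * (t + δ) ^ (-(s + (1 - s)))))
      volume 0 T :=
    ((intervalIntegrable_iff_integrableOn_Ioc_of_le hT).2 <|
      (integrableOn_rpow_mul_add_rpow hs.1 (by linarith [hs.2]) hδ).mono_set
        Ioc_subset_Ioi_self).const_mul δ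
  have primitive : ∫ t in (0 : ℝ)..T, t ^ (s - 1) = T ^ s / s := by
    rw [integral_rpow (Or.inl (by linarith [hs.1])), sub_add_cancel, Real.zero_rpow hs.1.ne',
      sub_zero]
  rw [← primitive, ← intervalIntegral.integral_const_mul,
    ← intervalIntegral.integral_sub power tail]
  refine intervalIntegral.integral_congr_ae (Eventually.of_forall fun t ht => ?_)
  have ht : 0 < t := (uIoc_of_le hT ▸ ht).1
  rw [add_sub_cancel, Real.rpow_neg_one, Real.rpow_sub_one ht.ne']
  field_simp
  ring

theorem tendsto_rpow_div_sub_intervalIntegral (hs : s ∈ Ioo (0 : ℝ) 1) (hδ : 0 < δ) :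
    Tendsto (fun T : ℝ => T ^ s / s - ∫ t in (0 : ℝ)..T, t ^ s / (t + δ)) atTop
      (𝓝 (δ ^ s * (Real.Gamma s * Real.Gamma (1 - s)))) := by
  have hs' : 0 < 1 - s := by linarith [hs.2]
  have value : δ * ∫ t in Ioi (0 : ℝ), t ^ (s - 1) * (t + δ) ^ (-(s + (1 - s))) =
      δ ^ s * (Real.Gamma s * Real.Gamma (1 - s)) := by
    rw [integral_rpow_mul_add_rpow hs.1 hs' hδ, add_sub_cancel, Real.Gamma_one, div_one, neg_sub,
      Real.rpow_sub_one hδ.ne']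
    field_simp
  rw [← value]
  refine ((intervalIntegral_tendsto_integral_Ioi 0
    (integrableOn_rpow_mul_add_rpow hs.1 hs' hδ) tendsto_id).const_mul δ).congr' ?_
  filter_upwards [eventually_ge_atTop 0] with T hT
  rw [intervalIntegral_rpow_div_add hs hδ hT, sub_sub_cancel, id]

end Beta

section Rpow

variable {s : ℝ}

theorem add_rpow_sub_rpow_le (hs : s ∈ Icc (0 : ℝ) 1) {X b : ℝ} (hX : 0 < X) (hb : 0 ≤ b) :
    (X + b) ^ s - X ^ s ≤ s * b * X ^ (s - 1) := by
  have bernoulli : (1 + b / X) ^ s ≤ 1 + s * (b / X) :=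
    rpow_one_add_le_one_add_mul_self (by linarith [div_nonneg hb hX.le]) hs.1 hs.2
  have factor : (X + b) ^ s = X ^ s * (1 + b / X) ^ s := by
    rw [← Real.mul_rpow hX.le (by positivity), mul_one_add, mul_div_cancel₀ _ hX.ne']
  rw [factor, Real.rpow_sub_one hX.ne']
  calc X ^ s * (1 + b / X) ^ s - X ^ s ≤ X ^ s * (1 + s * (b / X)) - X ^ s := by gcongr
    _ = s * b * (X ^ s / X) := by ring

theorem tendsto_add_rpow_sub_rpow (hs : s ∈ Ico (0 : ℝ) 1) (b : ℝ) :
    Tendsto (fun X : ℝ => (X + b) ^ s - X ^ s) atTop (𝓝 0) := by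
  have nonneg_case : ∀ b : ℝ, 0 ≤ b →
      Tendsto (fun X : ℝ => (X + b) ^ s - X ^ s) atTop (𝓝 0) := by
    intro b hb
    have bound : Tendsto (fun X : ℝ => s * b * X ^ (s - 1)) atTop (𝓝 0) := by
      simpa using (tendsto_rpow_neg_atTop (show 0 < 1 - s by linarith [hs.2])).const_mul (s * b)
    refine squeeze_zero' ?_ ?_ bound
    · filter_upwards [eventually_gt_atTop 0] with X hX
      exact sub_nonneg.2 (Real.rpow_le_rpow hX.le (by linarith) hs.1)
    · filter_upwards [eventually_gt_atTop 0] with X hX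
      exact add_rpow_sub_rpow_le (Ico_subset_Icc_self hs) hX hb
  rcases le_total 0 b with hb | hb
  · exact nonneg_case b hb
  · have shifted := ((nonneg_case (-b) (neg_nonneg.2 hb)).comp
      (tendsto_atTop_add_const_right atTop b tendsto_id)).neg
    simpa [Function.comp_def] using shifted

end Rpow

theorem measurable_indicator_closedBall_rpow {E : Type*} [NormedAddCommGroup E]
    [MeasurableSpace E] [OpensMeasurableSpace E] (p : E) (R q : ℝ) :
    Measurable ((closedBall p R).indicator fun ζ => ENNReal.ofReal (‖ζ‖ ^ q)) :=
  Measurable.indicator (by fun_prop) measurableSet_closedBall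

section BallMoment

variable {E : Type*} [NormedAddCommGroup E] [InnerProductSpace ℝ E]

theorem two_mul_rpow_le_quadRoot_rpow_add {β y s : ℝ} (hy : 0 < y) :
    2 * y ^ s ≤ quadRoot β y ^ (2 * s) + quadRoot (-β) y ^ (2 * s) := by
  have h₁ : 0 ≤ quadRoot β y := (quadRoot_pos hy).le
  have h₂ : 0 ≤ quadRoot (-β) y := (quadRoot_pos hy).le
  have prod : y ^ s = quadRoot β y ^ s * quadRoot (-β) y ^ s := by
    rw [← Real.mul_rpow h₁ h₂, quadRoot_mul_quadRoot_neg (by positivity)]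
  rw [prod, mul_comm 2 s, Real.rpow_mul h₁, Real.rpow_mul h₂, Real.rpow_two, Real.rpow_two,
    ← mul_assoc]
  exact two_mul_le_add_sq _ _

theorem quadRoot_rpow_add_le {β y s : ℝ} (hs : s ∈ Icc (0 : ℝ) 1) (hy : 0 < y) :
    quadRoot β y ^ (2 * s) + quadRoot (-β) y ^ (2 * s) ≤ 2 * (y + 2 * β ^ 2) ^ s := by
  have sq_add_sq : 1 / 2 * quadRoot β y ^ 2 + 1 / 2 * quadRoot (-β) y ^ 2 = y + 2 * β ^ 2 := by
    have sum := quadRoot_add_quadRoot_neg β y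
    have prod := quadRoot_mul_quadRoot_neg (β := β) (y := y) (by positivity)
    have sqrt := Real.sq_sqrt (show 0 ≤ β ^ 2 + y by positivity)
    linear_combination (quadRoot β y + quadRoot (-β) y + 2 * √(β ^ 2 + y)) / 2 * sum - prod +
      2 * sqrt
  have concave := (Real.concaveOn_rpow hs.1 hs.2).2 (mem_Ici.2 (sq_nonneg (quadRoot β y)))
    (mem_Ici.2 (sq_nonneg (quadRoot (-β) y))) one_half_pos.le one_half_pos.le (add_halves 1)
  simp only [smul_eq_mul, sq_add_sq] at concave
  rw [Real.rpow_mul (quadRoot_pos hy).le, Real.rpow_mul (quadRoot_pos hy).le, Real.rpow_two,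
    Real.rpow_two]
  linarith

theorem lintegral_Ioc_rpow_sub_one {q T : ℝ} (hq : 0 < q) (hT : 0 ≤ T) :
    ∫⁻ t in Ioc 0 T, ENNReal.ofReal (t ^ (q - 1)) = ENNReal.ofReal (T ^ q / q) := by
  have hi : IntegrableOn (fun t : ℝ => t ^ (q - 1)) (Ioc 0 T) :=
    (intervalIntegrable_iff_integrableOn_Ioc_of_le hT).1
      (intervalIntegral.intervalIntegrable_rpow' (by linarith))
  rw [← ofReal_integral_eq_lintegral_ofReal hi
    ((ae_restrict_mem measurableSet_Ioc).mono fun t ht => Real.rpow_nonneg ht.1.le _),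
    ← intervalIntegral.integral_of_le hT, integral_rpow (Or.inl (by linarith)), sub_add_cancel,
    Real.zero_rpow hq.ne', sub_zero]

theorem smul_mem_closedBall_iff_le_quadRoot {R : ℝ} {p θ : E} (hp : ‖p‖ < R) (hθ : ‖θ‖ = 1)
    {t : ℝ} (ht : 0 ≤ t) :
    t • θ ∈ closedBall p R ↔ t ≤ quadRoot (-⟪p, θ⟫) (R ^ 2 - ‖p‖ ^ 2) := by
  have hR : 0 < R ^ 2 - ‖p‖ ^ 2 :=
    sub_pos.2 (pow_lt_pow_left₀ hp (norm_nonneg p) two_ne_zero)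
  rw [le_quadRoot_iff ht hR, mem_closedBall_iff_norm, ← sq_le_sq₀ (norm_nonneg _)
    ((norm_nonneg p).trans hp.le), sub_eq_add_neg, norm_smul_add_sq hθ, norm_neg, inner_neg_left,
    le_sub_iff_add_le']

variable [FiniteDimensional ℝ E] [Nontrivial E]

theorem lintegral_dir_closedBall_rpow {q R : ℝ} (hq : 0 < q) {p θ : E} (hp : ‖p‖ < R)
    (hθ : ‖θ‖ = 1) :
    ∫⁻ t in Ioi (0 : ℝ), ENNReal.ofReal (t ^ (finrank ℝ E - 1)) *
        (closedBall p R).indicator (fun ζ => ENNReal.ofReal (‖ζ‖ ^ (q - finrank ℝ E))) (t • θ) =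
      ENNReal.ofReal (quadRoot (-⟪p, θ⟫) (R ^ 2 - ‖p‖ ^ 2) ^ q / q) := by
  have hR : 0 < R ^ 2 - ‖p‖ ^ 2 :=
    sub_pos.2 (pow_lt_pow_left₀ hp (norm_nonneg p) two_ne_zero)
  rw [← lintegral_Ioc_rpow_sub_one hq (quadRoot_pos hR).le, ← Ioi_inter_Iic, inter_comm,
    ← Measure.restrict_restrict measurableSet_Iic, ← lintegral_indicator measurableSet_Iic]
  refine setLIntegral_congr_fun measurableSet_Ioi fun t (ht : 0 < t) => ?_
  have mem_iff := smul_mem_closedBall_iff_le_quadRoot hp hθ ht.le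
  by_cases h : t ≤ quadRoot (-⟪p, θ⟫) (R ^ 2 - ‖p‖ ^ 2)
  · rw [indicator_of_mem (mem_Iic.2 h), indicator_of_mem (mem_iff.2 h), norm_smul, hθ, mul_one,
      Real.norm_of_nonneg ht.le, ← ENNReal.ofReal_mul (by positivity),
      pow_pred_mul_rpow finrank_pos ht]
  · rw [indicator_of_notMem (mt mem_iff.1 h), indicator_of_notMem (mt mem_Iic.1 h), mul_zero]

variable [MeasurableSpace E] [BorelSpace E]

theorem lintegral_dir_closedBall_rpow_add {q R : ℝ} (hq : 0 < q) {p θ : E} (hp : ‖p‖ < R)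
    (hθ : ‖θ‖ = 1) :
    ∫⁻ t in Ioi (0 : ℝ), ENNReal.ofReal (t ^ (finrank ℝ E - 1)) *
        ((closedBall p R).indicator
          (fun ζ => ENNReal.ofReal (‖ζ‖ ^ (q - finrank ℝ E))) (t • θ) +
        (closedBall p R).indicator
          (fun ζ => ENNReal.ofReal (‖ζ‖ ^ (q - finrank ℝ E))) (-(t • θ))) =
      ENNReal.ofReal ((quadRoot ⟪p, θ⟫ (R ^ 2 - ‖p‖ ^ 2) ^ q +
        quadRoot (-⟪p, θ⟫) (R ^ 2 - ‖p‖ ^ 2) ^ q) / q) := by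
  have hR : 0 < R ^ 2 - ‖p‖ ^ 2 :=
    sub_pos.2 (pow_lt_pow_left₀ hp (norm_nonneg p) two_ne_zero)
  have opposite := lintegral_dir_closedBall_rpow hq hp (θ := -θ) (by rwa [norm_neg])
  simp only [smul_neg, inner_neg_right, neg_neg] at opposite
  have hm := measurable_indicator_closedBall_rpow p R (q - finrank ℝ E)
  have root_nonneg : ∀ β, 0 ≤ quadRoot β (R ^ 2 - ‖p‖ ^ 2) ^ q / q := fun β =>
    div_nonneg (Real.rpow_nonneg (quadRoot_pos hR).le _) hq.le
  simp only [mul_add]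
  rw [lintegral_add_left (by fun_prop), lintegral_dir_closedBall_rpow hq hp hθ, opposite,
    add_comm, ← ENNReal.ofReal_add (root_nonneg _) (root_nonneg _), add_div]

variable {s R : ℝ} {p : E}

theorem two_mul_lintegral_closedBall_rpow_le (hs : s ∈ Ioc (0 : ℝ) 1) (hp : ‖p‖ < R) :
    2 * ∫⁻ ζ in closedBall p R, ENNReal.ofReal (‖ζ‖ ^ (2 * s - finrank ℝ E)) ≤
      ENNReal.ofReal ((R ^ 2 + ‖p‖ ^ 2) ^ s / s) * (volume : Measure E).toSphere univ := by
  have hs0 : 0 < s := hs.1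
  have hR : 0 < R ^ 2 - ‖p‖ ^ 2 :=
    sub_pos.2 (pow_lt_pow_left₀ hp (norm_nonneg p) two_ne_zero)
  rw [← lintegral_indicator measurableSet_closedBall]
  refine two_mul_lintegral_le_of_forall_dir (measurable_indicator_closedBall_rpow _ _ _)
    fun θ hθ => ?_
  rw [lintegral_dir_closedBall_rpow_add (by positivity) hp hθ]
  have inner_sq_le : ⟪p, θ⟫ ^ 2 ≤ ‖p‖ ^ 2 := by
    simpa [hθ] using sq_le_sq.2 ((abs_real_inner_le_norm p θ).trans (le_abs_self _))
  refine ENNReal.ofReal_le_ofReal ?_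
  rw [← mul_div_mul_left _ s two_ne_zero]
  gcongr
  exact (quadRoot_rpow_add_le (Ioc_subset_Icc_self hs) hR).trans <|
    mul_le_mul_of_nonneg_left (Real.rpow_le_rpow (by positivity) (by linarith) hs0.le) two_pos.le

theorem le_two_mul_lintegral_closedBall_rpow (hs : 0 < s) (hp : ‖p‖ < R) :
    ENNReal.ofReal ((R ^ 2 - ‖p‖ ^ 2) ^ s / s) * (volume : Measure E).toSphere univ ≤
      2 * ∫⁻ ζ in closedBall p R, ENNReal.ofReal (‖ζ‖ ^ (2 * s - finrank ℝ E)) := by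
  have hR : 0 < R ^ 2 - ‖p‖ ^ 2 :=
    sub_pos.2 (pow_lt_pow_left₀ hp (norm_nonneg p) two_ne_zero)
  rw [← lintegral_indicator measurableSet_closedBall]
  refine le_two_mul_lintegral_of_forall_dir (measurable_indicator_closedBall_rpow _ _ _)
    fun θ hθ => ?_
  rw [lintegral_dir_closedBall_rpow_add (by positivity) hp hθ]
  refine ENNReal.ofReal_le_ofReal ?_
  rw [← mul_div_mul_left _ s two_ne_zero]
  gcongr
  exact two_mul_rpow_le_quadRoot_rpow_add hR

end BallMoment

section Inversion

variable {E : Type*} [NormedAddCommGroup E] [InnerProductSpace ℝ E]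

theorem inversion_zero_one_eq_smul (ζ : E) : inversion (0 : E) 1 ζ = (‖ζ‖ ^ 2)⁻¹ • ζ := by
  simp [inversion]

theorem norm_inversion_zero_one (ζ : E) : ‖inversion (0 : E) 1 ζ‖ = ‖ζ‖⁻¹ := by
  simpa [div_eq_inv_mul] using dist_inversion_center (0 : E) ζ 1

theorem inversion_zero_one_ne_zero {ζ : E} (hζ : ζ ≠ 0) : inversion (0 : E) 1 ζ ≠ 0 := by
  rwa [Ne, inversion_eq_center one_ne_zero]

theorem image_inversion_compl_center (c : E) {R : ℝ} (hR : R ≠ 0) :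
    inversion c R '' {c}ᶜ = {c}ᶜ := by
  rw [image_compl_eq (inversion_bijective c hR), image_singleton, inversion_self]

theorem inv_norm_pow_mul_inversion_kernel {ζ : E} (hζ : ζ ≠ 0) (q b : ℝ) :
    (1 / ‖ζ‖) ^ (2 * finrank ℝ E) * (b / ‖inversion (0 : E) 1 ζ‖ ^ q) =
      b * ‖ζ‖ ^ (q - 2 * finrank ℝ E) := by
  have hz : 0 < ‖ζ‖ := norm_pos_iff.2 hζ
  rw [norm_inversion_zero_one, Real.inv_rpow hz.le, Real.rpow_sub hz, one_div, inv_pow,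
    ← Real.rpow_natCast]
  push_cast
  field_simp

theorem measurable_inversion [MeasurableSpace E] [BorelSpace E] [SecondCountableTopology E]
    (c : E) (R : ℝ) : Measurable (inversion c R) := by
  unfold inversion
  simp only [vsub_eq_sub, vadd_eq_add]
  fun_prop

variable [FiniteDimensional ℝ E]

theorem abs_det_smul_reflection (k : ℝ) (K : Submodule ℝ E) :
    |(k • (K.reflection : E →L[ℝ] E)).det| = |k| ^ finrank ℝ E := by
  have h : |LinearMap.det K.reflection.toLinearMap| = 1 := by
    rw [K.det_reflection, abs_pow, abs_neg, abs_one, one_pow]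
  rw [ContinuousLinearMap.det, ContinuousLinearMap.toLinearMap_smul, LinearMap.det_smul, abs_mul,
    abs_pow]
  exact (congrArg _ h).trans (mul_one _)

theorem abs_det_fderiv_inversion (c : E) (R : ℝ) (x : E) :
    |((R / dist x c) ^ 2 • ((ℝ ∙ (x - c))ᗮ.reflection : E →L[ℝ] E)).det| =
      (R / dist x c) ^ (2 * finrank ℝ E) := by
  rw [abs_det_smul_reflection, abs_of_nonneg (sq_nonneg _), pow_mul]

variable [MeasurableSpace E] [BorelSpace E] [Nontrivial E]

theorem lintegral_inversion (c : E) {R : ℝ} (hR : R ≠ 0) (g : E → ℝ≥0∞) :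
    ∫⁻ x, ENNReal.ofReal ((R / dist x c) ^ (2 * finrank ℝ E)) * g (inversion c R x) =
      ∫⁻ y, g y := by
  have h := lintegral_image_eq_lintegral_abs_det_fderiv_mul volume
    (measurableSet_singleton c).compl
    (fun x hx => (hasFDerivAt_inversion (R := R) hx).hasFDerivWithinAt)
    (inversion_injective c hR).injOn g
  simpa only [image_inversion_compl_center c hR, restrict_compl_singleton,
    abs_det_fderiv_inversion] using h.symm

theorem integral_inversion (c : E) {R : ℝ} (hR : R ≠ 0) (g : E → ℝ) :
    ∫ x, (R / dist x c) ^ (2 * finrank ℝ E) * g (inversion c R x) = ∫ y, g y := by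
  have h := integral_image_eq_integral_abs_det_fderiv_smul volume
    (measurableSet_singleton c).compl
    (fun x hx => (hasFDerivAt_inversion (R := R) hx).hasFDerivWithinAt)
    (inversion_injective c hR).injOn g
  simpa only [image_inversion_compl_center c hR, restrict_compl_singleton,
    abs_det_fderiv_inversion, smul_eq_mul] using h.symm

/-- In the inverted variable, truncating a singular integral near the origin means integrating over
a large ball. -/
theorem setIntegral_le_norm_div_rpow {ρ : ℝ} (hρ : 0 < ρ) (q : ℝ) (g : E → ℝ) :
    ∫ y in {y : E | ρ ≤ ‖y‖}, g y / ‖y‖ ^ q =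
      ∫ ζ in closedBall 0 ρ⁻¹, g (inversion 0 1 ζ) * ‖ζ‖ ^ (q - 2 * finrank ℝ E) := by
  have hmeas : MeasurableSet {y : E | ρ ≤ ‖y‖} := measurableSet_le measurable_const measurable_norm
  rw [← integral_indicator hmeas, ← integral_indicator measurableSet_closedBall,
    ← integral_inversion 0 one_ne_zero]
  refine integral_congr_ae ?_
  filter_upwards [compl_mem_ae_iff.2 (measure_singleton (0 : E))] with ζ hζ
  have hmem : inversion 0 1 ζ ∈ {y : E | ρ ≤ ‖y‖} ↔ ζ ∈ closedBall (0 : E) ρ⁻¹ := by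
    rw [mem_ofPred_eq, norm_inversion_zero_one, mem_closedBall_zero_iff,
      le_inv_comm₀ hρ (norm_pos_iff.2 hζ)]
  by_cases h : ζ ∈ closedBall (0 : E) ρ⁻¹
  · rw [indicator_of_mem h, indicator_of_mem (hmem.2 h), dist_zero_right,
      inv_norm_pow_mul_inversion_kernel hζ]
  · rw [indicator_of_notMem h, indicator_of_notMem (mt hmem.1 h), mul_zero]

end Inversion

section Geometry

theorem sq_rpow {t : ℝ} (ht : 0 ≤ t) (y : ℝ) : (t ^ 2) ^ y = t ^ (2 * y) := by
  rw [Real.rpow_mul ht, Real.rpow_two]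

variable {E : Type*} [NormedAddCommGroup E] {a x ζ : E}

theorem one_sub_norm_sq_pos (hx : ‖x‖ < 1) : 0 < 1 - ‖x‖ ^ 2 := by
  nlinarith [norm_nonneg x]

theorem norm_sq_sub_one_pos (ha : 1 < ‖a‖) : 0 < ‖a‖ ^ 2 - 1 := by
  nlinarith

theorem ne_of_norm_lt (h : ‖x‖ < ‖a‖) : a ≠ x :=
  fun hax => h.ne (congrArg norm hax.symm)

theorem norm_sub_pos_of_norm_lt (h : ‖x‖ < ‖a‖) : 0 < ‖x - a‖ :=
  norm_sub_pos_iff.2 (ne_of_norm_lt h).symm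

variable [InnerProductSpace ℝ E]

theorem one_sub_norm_add_inversion_sq (hx : ‖x‖ < 1) (hζ : ζ ≠ 0) :
    1 - ‖x + inversion 0 1 ζ‖ ^ 2 = (1 - ‖x‖ ^ 2) *
      (‖ζ - (1 - ‖x‖ ^ 2)⁻¹ • x‖ ^ 2 - (1 - ‖x‖ ^ 2)⁻¹ ^ 2) / ‖ζ‖ ^ 2 := by
  have hw := one_sub_norm_sq_pos hx
  have : 0 < ‖ζ‖ := norm_pos_iff.2 hζ
  rw [norm_add_sq_real, norm_sub_sq_real, norm_inversion_zero_one, inversion_zero_one_eq_smul,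
    inner_smul_right, inner_smul_right, norm_smul, real_inner_comm x ζ,
    Real.norm_of_nonneg (by positivity)]
  field_simp
  ring

theorem norm_add_inversion_sub (hax : a ≠ x) (hζ : ζ ≠ 0) :
    ‖x + inversion 0 1 ζ - a‖ = ‖x - a‖ * ‖ζ - inversion 0 1 (a - x)‖ / ‖ζ‖ := by
  have ha : a - x ≠ 0 := sub_ne_zero.2 hax
  have h := dist_inversion_inversion hζ (inversion_zero_one_ne_zero ha) 1
  rw [inversion_inversion 0 one_ne_zero, dist_zero_right, dist_zero_right, dist_eq_norm,
    dist_eq_norm, norm_inversion_zero_one] at h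
  rw [show x + inversion 0 1 ζ - a = inversion 0 1 ζ - (a - x) by abel, h, norm_sub_rev x a]
  field_simp

theorem sq_sub_norm_inversion_sub_sq (hx : ‖x‖ < 1) (hax : a ≠ x) :
    (1 - ‖x‖ ^ 2)⁻¹ ^ 2 - ‖inversion 0 1 (a - x) - (1 - ‖x‖ ^ 2)⁻¹ • x‖ ^ 2 =
      (‖a‖ ^ 2 - 1) / ((1 - ‖x‖ ^ 2) * ‖x - a‖ ^ 2) := by
  have hw := one_sub_norm_sq_pos hx
  have h := one_sub_norm_add_inversion_sq hx (inversion_zero_one_ne_zero (sub_ne_zero.2 hax))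
  rw [inversion_inversion 0 one_ne_zero, add_sub_cancel, norm_inversion_zero_one,
    norm_sub_rev a x] at h
  have := norm_pos_iff.2 (sub_ne_zero.2 hax.symm)
  rw [eq_div_iff (by positivity), ← neg_sub 1, h]
  field_simp
  ring

end Geometry

section Profile

variable {E : Type*} [NormedAddCommGroup E] [InnerProductSpace ℝ E] {a x : E} {s : ℝ}

/-- The function `(1 - |x|²)₊ ^ s |x - a| ^ (-d)`, a multiple of the Dirichlet solution with
right-hand side `|x - a| ^ (-d - 2 * s)` when `1 < |a|`. -/
noncomputable def ballProfile (s : ℝ) (a x : E) : ℝ :=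
  (max (1 - ‖x‖ ^ 2) 0) ^ s * ‖x - a‖ ^ (-(finrank ℝ E : ℝ))

theorem ballProfile_nonneg (s : ℝ) (a x : E) : 0 ≤ ballProfile s a x := by
  unfold ballProfile
  positivity

theorem ballProfile_of_one_le_norm (hs : s ≠ 0) (a : E) (hx : 1 ≤ ‖x‖) :
    ballProfile s a x = 0 := by
  rw [ballProfile, max_eq_right (by nlinarith), Real.zero_rpow hs, zero_mul]

theorem ballProfile_of_norm_lt (hx : ‖x‖ < 1) :
    ballProfile s a x = (1 - ‖x‖ ^ 2) ^ s * ‖x - a‖ ^ (-(finrank ℝ E : ℝ)) := by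
  rw [ballProfile, max_eq_left (one_sub_norm_sq_pos hx).le]

theorem ballProfile_le (hs : s ≠ 0) (ha : 1 < ‖a‖) (x : E) :
    ballProfile s a x ≤ (‖a‖ - 1) ^ (-(finrank ℝ E : ℝ)) * (max (1 - ‖x‖ ^ 2) 0) ^ s := by
  have ha0 : 0 < ‖a‖ - 1 := sub_pos.2 ha
  rcases lt_or_ge ‖x‖ 1 with hx | hx
  · rw [ballProfile, mul_comm]
    refine mul_le_mul_of_nonneg_right (Real.rpow_le_rpow_of_nonpos ha0 ?_ (by simp)) (by positivity)
    rw [norm_sub_rev]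
    exact (sub_le_sub_left hx.le _).trans (norm_sub_norm_le a x)
  · rw [ballProfile_of_one_le_norm hs a hx]
    positivity

theorem abs_ballProfile_le (hs : 0 < s) (ha : 1 < ‖a‖) (x : E) :
    |ballProfile s a x| ≤ (‖a‖ - 1) ^ (-(finrank ℝ E : ℝ)) := by
  rw [abs_of_nonneg (ballProfile_nonneg _ _ _)]
  refine (ballProfile_le hs.ne' ha x).trans (mul_le_of_le_one_right ?_ ?_)
  · exact Real.rpow_nonneg (sub_pos.2 ha).le _
  · exact Real.rpow_le_one (le_max_right _ _)
      (max_le (sub_le_self _ (sq_nonneg _)) zero_le_one) hs.le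

theorem continuous_ballProfile (hs : 0 < s) (ha : 1 < ‖a‖) : Continuous (ballProfile s a) := by
  rw [continuous_iff_continuousAt]
  intro x
  rcases eq_or_ne x a with rfl | hxa
  · have : ballProfile s x =ᶠ[𝓝 x] fun _ => 0 := by
      filter_upwards [(isOpen_lt continuous_const continuous_norm).mem_nhds ha] with z hz
      exact ballProfile_of_one_le_norm hs.ne' x (le_of_lt hz)
    exact continuousAt_const.congr this.symm
  · have hc : Continuous fun x : E => (max (1 - ‖x‖ ^ 2) 0) ^ s :=
      Continuous.rpow_const (by fun_prop) fun _ => Or.inr hs.le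
    exact hc.continuousAt.mul (ContinuousAt.rpow_const (by fun_prop)
      (Or.inl (norm_ne_zero_iff.2 (sub_ne_zero.2 hxa))))

theorem differentiableAt_ballProfile (hx : ‖x‖ < 1) (hxa : x ≠ a) :
    DifferentiableAt ℝ (ballProfile s a) x := by
  have hev : ballProfile s a =ᶠ[𝓝 x]
      fun x => (1 - ‖x‖ ^ 2) ^ s * ‖x - a‖ ^ (-(finrank ℝ E : ℝ)) := by
    filter_upwards [(isOpen_lt continuous_norm continuous_const).mem_nhds hx] with z hz
    exact ballProfile_of_norm_lt hz
  have hsub : x - a ≠ 0 := sub_ne_zero.2 hxa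
  have hnorm : DifferentiableAt ℝ (fun z => ‖z - a‖) x :=
    DifferentiableAt.norm ℝ (differentiableAt_id.sub_const a) hsub
  have hweight : DifferentiableAt ℝ (fun z : E => 1 - ‖z‖ ^ 2) x :=
    (differentiableAt_const _).sub (differentiableAt_id.norm_sq ℝ)
  exact ((hweight.rpow_const (Or.inl (one_sub_norm_sq_pos hx).ne')).mul
    (hnorm.rpow_const (Or.inl (norm_ne_zero_iff.2 hsub)))).congr_of_eventuallyEq hev

theorem ballProfile_add_inversion {ζ : E} (hx : ‖x‖ < 1) (hax : a ≠ x) (hζ : ζ ≠ 0) :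
    ballProfile s a (x + inversion 0 1 ζ) * ‖ζ‖ ^ (2 * s - finrank ℝ E) =
      ballProfile s a x *
        ((max (‖ζ - (1 - ‖x‖ ^ 2)⁻¹ • x‖ ^ 2 - (1 - ‖x‖ ^ 2)⁻¹ ^ 2) 0) ^ s *
          ‖ζ - inversion 0 1 (a - x)‖ ^ (-(finrank ℝ E : ℝ))) := by
  have hw := one_sub_norm_sq_pos hx
  have hz : 0 < ‖ζ‖ := norm_pos_iff.2 hζ
  rw [ballProfile_of_norm_lt hx, ballProfile, one_sub_norm_add_inversion_sq hx hζ,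
    norm_add_inversion_sub hax hζ]
  set M := ‖ζ - (1 - ‖x‖ ^ 2)⁻¹ • x‖ ^ 2 - (1 - ‖x‖ ^ 2)⁻¹ ^ 2
  have hM : max ((1 - ‖x‖ ^ 2) * M / ‖ζ‖ ^ 2) 0 = (1 - ‖x‖ ^ 2) * max M 0 / ‖ζ‖ ^ 2 := by
    rw [mul_div_right_comm, mul_div_right_comm, mul_max_of_nonneg _ _ (by positivity), mul_zero]
  have hm : 0 ≤ max M 0 := le_max_right _ _
  rw [hM, Real.div_rpow (by positivity) (by positivity), Real.mul_rpow hw.le hm, sq_rpow hz.le,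
    Real.div_rpow (by positivity) hz.le, Real.mul_rpow (norm_nonneg _) (norm_nonneg _),
    sub_eq_add_neg (2 * s), Real.rpow_add hz]
  have h1 : ‖ζ‖ ^ (2 * s) ≠ 0 := (Real.rpow_pos_of_pos hz _).ne'
  have h2 : ‖ζ‖ ^ (-(finrank ℝ E : ℝ)) ≠ 0 := (Real.rpow_pos_of_pos hz _).ne'
  field_simp

end Profile

section LintegralToIntegral

variable {X : Type*} [MeasurableSpace X] {μ : Measure X} {g : X → ℝ} {A : ℝ} {σ : ℝ≥0∞}

theorem integrable_of_two_mul_lintegral_le (hg : AEStronglyMeasurable g μ) (hg0 : 0 ≤ g)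
    (hσ : σ ≠ ⊤) (h : 2 * ∫⁻ x, ENNReal.ofReal (g x) ∂μ ≤ ENNReal.ofReal A * σ) :
    Integrable g μ := by
  refine ⟨hg, (hasFiniteIntegral_iff_ofReal (Eventually.of_forall hg0)).2 ?_⟩
  have : 2 * ∫⁻ x, ENNReal.ofReal (g x) ∂μ < ⊤ :=
    h.trans_lt (ENNReal.mul_lt_top ENNReal.ofReal_lt_top hσ.lt_top)
  exact ENNReal.lt_top_of_mul_ne_top_right this.ne two_ne_zero

theorem two_mul_integral_le_of_lintegral (hg : AEStronglyMeasurable g μ) (hg0 : 0 ≤ g)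
    (hA : 0 ≤ A) (hσ : σ ≠ ⊤)
    (h : 2 * ∫⁻ x, ENNReal.ofReal (g x) ∂μ ≤ ENNReal.ofReal A * σ) :
    2 * ∫ x, g x ∂μ ≤ σ.toReal * A := by
  rw [integral_eq_lintegral_of_nonneg_ae (Eventually.of_forall hg0) hg]
  have := ENNReal.toReal_mono (ENNReal.mul_ne_top ENNReal.ofReal_ne_top hσ) h
  rwa [ENNReal.toReal_mul, ENNReal.toReal_mul, ENNReal.toReal_ofReal hA, ENNReal.toReal_ofNat,
    mul_comm A] at this

theorem le_two_mul_integral_of_lintegral (hg : Integrable g μ) (hg0 : 0 ≤ g) (hA : 0 ≤ A)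
    (h : ENNReal.ofReal A * σ ≤ 2 * ∫⁻ x, ENNReal.ofReal (g x) ∂μ) :
    σ.toReal * A ≤ 2 * ∫ x, g x ∂μ := by
  rw [← ofReal_integral_eq_lintegral_ofReal hg (Eventually.of_forall hg0)] at h
  have := ENNReal.toReal_mono (ENNReal.mul_ne_top ENNReal.ofNat_ne_top ENNReal.ofReal_ne_top) h
  rwa [ENNReal.toReal_mul, ENNReal.toReal_mul, ENNReal.toReal_ofReal hA, ENNReal.toReal_ofNat,
    ENNReal.toReal_ofReal (integral_nonneg hg0), mul_comm A] at this

theorem two_mul_integral_eq_of_lintegral (hg : AEStronglyMeasurable g μ) (hg0 : 0 ≤ g)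
    (hA : 0 ≤ A) (hσ : σ ≠ ⊤)
    (h : 2 * ∫⁻ x, ENNReal.ofReal (g x) ∂μ = ENNReal.ofReal A * σ) :
    2 * ∫ x, g x ∂μ = σ.toReal * A :=
  (two_mul_integral_le_of_lintegral hg hg0 hA hσ h.le).antisymm <|
    le_two_mul_integral_of_lintegral (integrable_of_two_mul_lintegral_le hg hg0 hσ h.le) hg0 hA h.ge

end LintegralToIntegral

section Moments

theorem lintegral_Ioi_mul_indicator_Iic_rpow {s δ T : ℝ} (hs : 0 < s) (hδ : 0 < δ) (hT : 0 ≤ T) :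
    ∫⁻ t in Ioi 0, ENNReal.ofReal (1 / (t + δ)) *
        (Iic T).indicator (fun t => ENNReal.ofReal ((max t 0) ^ s)) t =
      ENNReal.ofReal (∫ t in (0 : ℝ)..T, t ^ s / (t + δ)) := by
  have hcont : ContinuousOn (fun t : ℝ => t ^ s / (t + δ)) (Icc 0 T) :=
    (Real.continuous_rpow_const hs.le).continuousOn.div (by fun_prop) fun t ht => by
      linarith [ht.1]
  have nonneg : ∀ t ∈ Ioc 0 T, 0 ≤ t ^ s / (t + δ) := fun t ht =>
    div_nonneg (Real.rpow_nonneg ht.1.le _) (by linarith [ht.1])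
  rw [intervalIntegral.integral_of_le hT, ofReal_integral_eq_lintegral_ofReal
    (hcont.integrableOn_Icc.mono_set Ioc_subset_Icc_self)
    ((ae_restrict_mem measurableSet_Ioc).mono nonneg), ← Ioi_inter_Iic, inter_comm,
    ← Measure.restrict_restrict measurableSet_Iic, ← lintegral_indicator measurableSet_Iic]
  refine setLIntegral_congr_fun measurableSet_Ioi fun t (ht : 0 < t) => ?_
  by_cases h : t ∈ Iic T
  · rw [indicator_of_mem h, indicator_of_mem h, max_eq_left ht.le,
      ← ENNReal.ofReal_mul (by positivity), one_div_mul_eq_div]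
  · rw [indicator_of_notMem h, indicator_of_notMem h, mul_zero]

variable {E : Type*} [NormedAddCommGroup E] [InnerProductSpace ℝ E] [FiniteDimensional ℝ E]
  [MeasurableSpace E] [BorelSpace E] [Nontrivial E] {s R r : ℝ} {p c : E}

theorem integrableOn_closedBall_norm_rpow (hs : s ∈ Ioc (0 : ℝ) 1) (hp : ‖p‖ < R) :
    IntegrableOn (fun ζ : E => ‖ζ‖ ^ (2 * s - finrank ℝ E)) (closedBall p R) :=
  integrable_of_two_mul_lintegral_le (Measurable.aestronglyMeasurable (by fun_prop))
    (fun _ => by dsimp; positivity) (measure_ne_top _ _)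
    (two_mul_lintegral_closedBall_rpow_le hs hp)

theorem tendsto_two_mul_setIntegral_closedBall_rpow (hs : s ∈ Ioo (0 : ℝ) 1) (p : E) (b : ℝ) :
    Tendsto (fun R : ℝ => 2 * (∫ ζ in closedBall p R, ‖ζ‖ ^ (2 * s - finrank ℝ E)) -
      (volume : Measure E).toSphere.real univ * ((R ^ 2 + b) ^ s / s)) atTop (𝓝 0) := by
  have hs1 : s ∈ Ioc (0 : ℝ) 1 := Ioo_subset_Ioc_self hs
  have hsq : Tendsto (fun R : ℝ => R ^ 2) atTop atTop := tendsto_pow_atTop two_ne_zero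
  have diff : ∀ c : ℝ, Tendsto (fun R : ℝ => (volume : Measure E).toSphere.real univ *
      ((R ^ 2 + c) ^ s / s) - (volume : Measure E).toSphere.real univ *
        ((R ^ 2 + b) ^ s / s)) atTop (𝓝 0) := fun c => by
    have h := ((tendsto_add_rpow_sub_rpow (Ioo_subset_Ico_self hs) c).sub
      (tendsto_add_rpow_sub_rpow (Ioo_subset_Ico_self hs) b)).comp hsq
    have h' := (h.div_const s).const_mul ((volume : Measure E).toSphere.real univ)
    simp only [sub_zero, zero_div, mul_zero] at h'
    refine h'.congr fun R => ?_
    simp only [Function.comp_apply]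
    ring
  refine tendsto_of_tendsto_of_tendsto_of_le_of_le' (diff (-‖p‖ ^ 2)) (diff (‖p‖ ^ 2)) ?_ ?_
  all_goals
    filter_upwards [eventually_gt_atTop ‖p‖] with R hR
    have hR' : 0 ≤ R ^ 2 + -‖p‖ ^ 2 := by nlinarith [norm_nonneg p]
    refine sub_le_sub_right (c := _ * ((R ^ 2 + b) ^ s / s)) ?_
  · exact le_two_mul_integral_of_lintegral (integrableOn_closedBall_norm_rpow hs1 hR)
      (fun _ => by dsimp; positivity) (div_nonneg (Real.rpow_nonneg hR' _) hs.1.le)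
      (by simpa only [← sub_eq_add_neg] using le_two_mul_lintegral_closedBall_rpow hs.1 hR)
  · exact two_mul_integral_le_of_lintegral (Measurable.aestronglyMeasurable (by fun_prop))
      (fun _ => by dsimp; positivity) (div_nonneg (Real.rpow_nonneg (by positivity) _) hs.1.le)
      (measure_ne_top _ _)
      (two_mul_lintegral_closedBall_rpow_le hs1 hR)

theorem two_mul_lintegral_closedBall_excess (hs : 0 < s) (hcr : ‖c - p‖ ^ 2 < r ^ 2)
    (hr : 0 ≤ r) (hR : r ≤ R) :
    2 * ∫⁻ ζ in closedBall p R, ENNReal.ofReal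
        ((max (‖ζ - p‖ ^ 2 - r ^ 2) 0) ^ s * ‖ζ - c‖ ^ (-(finrank ℝ E : ℝ))) =
      ENNReal.ofReal (∫ t in (0 : ℝ)..(R ^ 2 - r ^ 2), t ^ s / (t + (r ^ 2 - ‖c - p‖ ^ 2))) *
        (volume : Measure E).toSphere univ := by
  have hT : 0 ≤ R ^ 2 - r ^ 2 := sub_nonneg.2 (pow_le_pow_left₀ hr hR 2)
  have hδ : 0 < r ^ 2 - ‖c - p‖ ^ 2 := sub_pos.2 hcr
  set G : ℝ → ℝ≥0∞ := (Iic (R ^ 2 - r ^ 2)).indicator fun t => ENNReal.ofReal ((max t 0) ^ s)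
    with hG
  have G_zero : ∀ t ≤ 0, G t = 0 := fun t ht => by
    rw [hG, indicator_of_mem (mem_Iic.2 (ht.trans hT)), max_eq_right ht, Real.zero_rpow hs.ne',
      ENNReal.ofReal_zero]
  have G_excess : ∀ ζ, G (‖ζ - p‖ ^ 2 - r ^ 2) * ENNReal.ofReal (‖ζ - c‖ ^ (-(finrank ℝ E : ℝ))) =
      (closedBall p R).indicator (fun ζ => ENNReal.ofReal
        ((max (‖ζ - p‖ ^ 2 - r ^ 2) 0) ^ s * ‖ζ - c‖ ^ (-(finrank ℝ E : ℝ)))) ζ := fun ζ => by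
    have mem_iff : ‖ζ - p‖ ^ 2 - r ^ 2 ∈ Iic (R ^ 2 - r ^ 2) ↔ ζ ∈ closedBall p R := by
      rw [mem_Iic, sub_le_sub_iff_right, sq_le_sq₀ (norm_nonneg _) (hr.trans hR),
        mem_closedBall_iff_norm]
    by_cases h : ζ ∈ closedBall p R
    · rw [hG, indicator_of_mem (mem_iff.2 h), indicator_of_mem h,
        ENNReal.ofReal_mul (by positivity)]
    · rw [hG, indicator_of_notMem (mt mem_iff.1 h), indicator_of_notMem h, zero_mul]
  have key := two_mul_lintegral_excess_mul_pole (G := G) hcr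
    (Measurable.indicator (by fun_prop) measurableSet_Iic) G_zero
  rw [← lintegral_indicator measurableSet_closedBall, ← lintegral_congr G_excess, key,
    lintegral_Ioi_mul_indicator_Iic_rpow hs hδ hT]

theorem integrableOn_closedBall_excess (hs : 0 < s) (hcr : ‖c - p‖ ^ 2 < r ^ 2)
    (hr : 0 ≤ r) (hR : r ≤ R) :
    IntegrableOn (fun ζ => (max (‖ζ - p‖ ^ 2 - r ^ 2) 0) ^ s * ‖ζ - c‖ ^ (-(finrank ℝ E : ℝ)))
      (closedBall p R) :=
  integrable_of_two_mul_lintegral_le (Measurable.aestronglyMeasurable (by fun_prop))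
    (fun _ => by dsimp; positivity) (measure_ne_top _ _)
    (two_mul_lintegral_closedBall_excess hs hcr hr hR).le

theorem two_mul_setIntegral_closedBall_excess (hs : 0 < s) (hcr : ‖c - p‖ ^ 2 < r ^ 2)
    (hr : 0 ≤ r) (hR : r ≤ R) :
    2 * ∫ ζ in closedBall p R,
        (max (‖ζ - p‖ ^ 2 - r ^ 2) 0) ^ s * ‖ζ - c‖ ^ (-(finrank ℝ E : ℝ)) =
      (volume : Measure E).toSphere.real univ *
        ∫ t in (0 : ℝ)..(R ^ 2 - r ^ 2), t ^ s / (t + (r ^ 2 - ‖c - p‖ ^ 2)) := by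
  have hT : 0 ≤ R ^ 2 - r ^ 2 := sub_nonneg.2 (pow_le_pow_left₀ hr hR 2)
  refine two_mul_integral_eq_of_lintegral (Measurable.aestronglyMeasurable (by fun_prop))
    (fun _ => by dsimp; positivity) (intervalIntegral.integral_nonneg hT fun t ht => ?_)
    (measure_ne_top _ _) (two_mul_lintegral_closedBall_excess hs hcr hr hR)
  exact div_nonneg (Real.rpow_nonneg ht.1 _) (by linarith [ht.1])

/-- The two divergent moments have a finite difference, which is what survives of the principal
value. -/
theorem tendsto_two_mul_setIntegral_closedBall_sub_excess (hs : s ∈ Ioo (0 : ℝ) 1)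
    (hcr : ‖c - p‖ ^ 2 < r ^ 2) (hr : 0 ≤ r) :
    Tendsto (fun R : ℝ => 2 * ∫ ζ in closedBall p R, (‖ζ‖ ^ (2 * s - finrank ℝ E) -
        (max (‖ζ - p‖ ^ 2 - r ^ 2) 0) ^ s * ‖ζ - c‖ ^ (-(finrank ℝ E : ℝ)))) atTop
      (𝓝 ((volume : Measure E).toSphere.real univ *
        ((r ^ 2 - ‖c - p‖ ^ 2) ^ s * (Real.Gamma s * Real.Gamma (1 - s))))) := by
  have hT : Tendsto (fun R : ℝ => R ^ 2 - r ^ 2) atTop atTop :=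
    tendsto_atTop_add_const_right atTop (-r ^ 2) (tendsto_pow_atTop two_ne_zero)
  have h := (tendsto_two_mul_setIntegral_closedBall_rpow hs p (-r ^ 2)).add
    (((tendsto_rpow_div_sub_intervalIntegral hs (sub_pos.2 hcr)).comp hT).const_mul
      ((volume : Measure E).toSphere.real univ))
  rw [zero_add] at h
  refine h.congr' ?_
  filter_upwards [eventually_gt_atTop ‖p‖, eventually_ge_atTop r] with R hp hR
  rw [integral_sub (integrableOn_closedBall_norm_rpow (Ioo_subset_Ioc_self hs) hp)
    (integrableOn_closedBall_excess hs.1 hcr hr hR), mul_sub,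
    two_mul_setIntegral_closedBall_excess hs.1 hcr hr hR]
  simp only [Function.comp_apply, ← sub_eq_add_neg]
  ring

end Moments

section Shell

theorem tendsto_add_pow_sub_pow_mul_rpow {d : ℕ} {q : ℝ} (hq : q < 1 - d) (b : ℝ) :
    Tendsto (fun x : ℝ => ((x + b) ^ d - x ^ d) * x ^ q) atTop (𝓝 0) := by
  have slope : HasDerivAt (fun y : ℝ => (1 + b * y) ^ d) (d * b) 0 := by
    simpa using (((hasDerivAt_id' (0 : ℝ)).const_mul b).const_add 1).fun_pow d
  have decay : Tendsto (fun x : ℝ => x ^ (-(1 - d - q))) atTop (𝓝 0) :=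
    tendsto_rpow_neg_atTop (sub_pos.2 hq)
  have h := (slope.tendsto_slope_zero_right.comp tendsto_inv_atTop_nhdsGT_zero).mul decay
  rw [mul_zero (d * b : ℝ)] at h
  refine h.congr' ?_
  filter_upwards [eventually_gt_atTop 0] with x hx
  have hxd : x ^ (-(1 - d - q)) = x ^ d * x ^ q / x := by
    rw [← Real.rpow_natCast, ← Real.rpow_add hx, ← Real.rpow_sub_one hx.ne']
    ring_nf
  have hb : (1 + b * x⁻¹) ^ d = (x + b) ^ d / x ^ d := by
    rw [← div_pow]
    congr 1
    field_simp
  simp only [Function.comp_apply, inv_inv, smul_eq_mul, zero_add, mul_zero, add_zero, one_pow,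
    hxd, hb]
  field_simp

variable {E : Type*} [NormedAddCommGroup E] [NormedSpace ℝ E] [FiniteDimensional ℝ E]
  [MeasurableSpace E] [BorelSpace E] {μ : Measure E} [μ.IsAddHaarMeasure]
  {k : E → ℝ} {q L R₀ : ℝ}

theorem abs_setIntegral_closedBall_sub_le {S : Set E} {A B : ℝ} (hAB : A ≤ B) (hA : 0 < A)
    (hR₀ : R₀ ≤ A) (hk : IntegrableOn k (closedBall 0 B) μ) (hq : q ≤ 0) (hL : 0 ≤ L)
    (decay : ∀ ζ, R₀ ≤ ‖ζ‖ → |k ζ| ≤ L * ‖ζ‖ ^ q) (hAS : closedBall 0 A ⊆ S)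
    (hSB : S ⊆ closedBall 0 B) :
    |∫ ζ in S, k ζ ∂μ - ∫ ζ in closedBall 0 A, k ζ ∂μ| ≤
      L * μ.real (ball 0 1) * ((B ^ finrank ℝ E - A ^ finrank ℝ E) * A ^ q) := by
  have diff_subset : S \ closedBall 0 A ⊆ closedBall 0 B \ closedBall 0 A :=
    sdiff_subset_sdiff_left hSB
  have volume_shell : μ.real (closedBall 0 B \ closedBall 0 A) =
      (B ^ finrank ℝ E - A ^ finrank ℝ E) * μ.real (ball 0 1) := by
    rw [measureReal_sdiff (closedBall_subset_closedBall hAB) measurableSet_closedBall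
        measure_closedBall_lt_top.ne,
      Measure.addHaar_real_closedBall _ _ (hA.le.trans hAB),
      Measure.addHaar_real_closedBall _ _ hA.le, sub_mul]
  have shell_lt_top : μ (closedBall 0 B \ closedBall 0 A) < ⊤ :=
    (measure_mono sdiff_subset).trans_lt measure_closedBall_lt_top
  rw [← setIntegral_sdiff measurableSet_closedBall (hk.mono_set hSB) hAS, ← Real.norm_eq_abs]
  refine (norm_setIntegral_le_of_norm_le_const (C := L * A ^ q)
    ((measure_mono diff_subset).trans_lt shell_lt_top) fun ζ hζ => ?_).trans ?_
  · have hζA : A ≤ ‖ζ‖ := by simpa using (not_le.1 (mt mem_closedBall_zero_iff.2 hζ.2)).le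
    exact (decay ζ (hR₀.trans hζA)).trans
      (mul_le_mul_of_nonneg_left (Real.rpow_le_rpow_of_nonpos hA hζA hq) hL)
  · refine (mul_le_mul_of_nonneg_left
      (measureReal_mono diff_subset shell_lt_top.ne) (by positivity)).trans_eq ?_
    rw [volume_shell]
    ring

variable [Nontrivial E]

theorem tendsto_setIntegral_sub_setIntegral_closedBall {S : ℝ → Set E} {P : ℝ} (hP : 0 ≤ P)
    (hk : ∀ R, IntegrableOn k (closedBall 0 R) μ) (hq : q < 1 - finrank ℝ E)
    (hL : 0 ≤ L) (decay : ∀ ζ, R₀ ≤ ‖ζ‖ → |k ζ| ≤ L * ‖ζ‖ ^ q)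
    (hS : ∀ R, closedBall 0 (R - P) ⊆ S R ∧ S R ⊆ closedBall 0 (R + P)) :
    Tendsto (fun R => ∫ ζ in S R, k ζ ∂μ - ∫ ζ in closedBall 0 (R - P), k ζ ∂μ) atTop (𝓝 0) := by
  have hq0 : q ≤ 0 := by
    have : (1 : ℝ) ≤ finrank ℝ E := Nat.one_le_cast.2 finrank_pos
    linarith
  have hshift : Tendsto (fun R : ℝ => R - P) atTop atTop :=
    tendsto_atTop_add_const_right atTop (-P) tendsto_id
  have bound := ((tendsto_add_pow_sub_pow_mul_rpow hq (2 * P)).comp hshift).const_mul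
    (L * μ.real (ball 0 1))
  rw [mul_zero] at bound
  refine squeeze_zero_norm' ?_ bound
  filter_upwards [eventually_gt_atTop P, eventually_ge_atTop (R₀ + P)] with R hRP hR₀
  simp only [Function.comp_apply, show R - P + 2 * P = R + P by ring]
  exact abs_setIntegral_closedBall_sub_le (by linarith) (by linarith) (by linarith) (hk _) hq0 hL
    decay (hS R).1 (hS R).2

theorem tendsto_setIntegral_closedBall_zero_sub_closedBall
    (hk : ∀ R, IntegrableOn k (closedBall 0 R) μ) (hq : q < 1 - finrank ℝ E)
    (hL : 0 ≤ L) (decay : ∀ ζ, R₀ ≤ ‖ζ‖ → |k ζ| ≤ L * ‖ζ‖ ^ q) (p : E) :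
    Tendsto (fun R => ∫ ζ in closedBall 0 R, k ζ ∂μ - ∫ ζ in closedBall p R, k ζ ∂μ) atTop
      (𝓝 0) := by
  have centered := tendsto_setIntegral_sub_setIntegral_closedBall (S := closedBall 0)
    (norm_nonneg p) hk hq hL decay fun R =>
      ⟨closedBall_subset_closedBall (by linarith [norm_nonneg p]),
        closedBall_subset_closedBall (by linarith [norm_nonneg p])⟩
  have shifted := tendsto_setIntegral_sub_setIntegral_closedBall (S := closedBall p)
    (norm_nonneg p) hk hq hL decay fun R =>
      ⟨closedBall_subset_closedBall' (by simp),
        closedBall_subset_closedBall' (by simp)⟩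
  simpa using centered.sub shifted

end Shell

section PrincipalValue

variable {E : Type*} [NormedAddCommGroup E] [InnerProductSpace ℝ E] {a x : E} {s : ℝ}

theorem ballProfile_sub_add_inversion_mul {ζ : E} (hx : ‖x‖ < 1) (hax : a ≠ x) (hζ : ζ ≠ 0) :
    (ballProfile s a x - ballProfile s a (x + inversion 0 1 ζ)) * ‖ζ‖ ^ (2 * s - finrank ℝ E) =
      ballProfile s a x * (‖ζ‖ ^ (2 * s - finrank ℝ E) -
        (max (‖ζ - (1 - ‖x‖ ^ 2)⁻¹ • x‖ ^ 2 - (1 - ‖x‖ ^ 2)⁻¹ ^ 2) 0) ^ s *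
          ‖ζ - inversion 0 1 (a - x)‖ ^ (-(finrank ℝ E : ℝ))) := by
  rw [sub_mul, ballProfile_add_inversion hx hax hζ, mul_sub]

theorem ballProfile_mul_defect (hx : ‖x‖ < 1) (ha : 1 < ‖a‖) :
    ballProfile s a x * ((‖a‖ ^ 2 - 1) / ((1 - ‖x‖ ^ 2) * ‖x - a‖ ^ 2)) ^ s =
      (‖a‖ ^ 2 - 1) ^ s * ‖x - a‖ ^ (-((finrank ℝ E : ℝ) + 2 * s)) := by
  have hw := one_sub_norm_sq_pos hx
  have hxa : 0 < ‖x - a‖ := norm_sub_pos_of_norm_lt (hx.trans ha)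
  rw [ballProfile_of_norm_lt hx, Real.div_rpow (norm_sq_sub_one_pos ha).le (by positivity),
    Real.mul_rpow hw.le (by positivity), sq_rpow hxa.le, neg_add, Real.rpow_add hxa,
    Real.rpow_neg hxa.le (2 * s)]
  have h1 : (1 - ‖x‖ ^ 2) ^ s ≠ 0 := (Real.rpow_pos_of_pos hw _).ne'
  have h2 : ‖x - a‖ ^ (2 * s) ≠ 0 := (Real.rpow_pos_of_pos hxa _).ne'
  field_simp

theorem exists_abs_sub_add_inversion_mul_rpow_le {U : E → ℝ} (hU : DifferentiableAt ℝ U x)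
    (q : ℝ) :
    ∃ L ≥ 0, ∃ R₀, ∀ ζ : E, R₀ ≤ ‖ζ‖ →
      |(U x - U (x + inversion 0 1 ζ)) * ‖ζ‖ ^ q| ≤ L * ‖ζ‖ ^ (q - 1) := by
  obtain ⟨L, hL⟩ := hU.isBigO_sub.bound
  obtain ⟨η, hη, lipschitz⟩ := Metric.eventually_nhds_iff.1 hL
  refine ⟨|L|, abs_nonneg L, η⁻¹ + 1, fun ζ hζ => ?_⟩
  have hη' : 0 < η⁻¹ := inv_pos.2 hη
  have hζ0 : 0 < ‖ζ‖ := by linarith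
  have near : dist (x + inversion 0 1 ζ) x < η := by
    rw [dist_eq_norm, add_sub_cancel_left, norm_inversion_zero_one]
    exact inv_lt_of_inv_lt₀ hη (by linarith)
  have bound := lipschitz near
  rw [add_sub_cancel_left, norm_inversion_zero_one, Real.norm_eq_abs, abs_sub_comm] at bound
  rw [abs_mul, abs_of_nonneg (Real.rpow_nonneg hζ0.le q), Real.rpow_sub_one hζ0.ne',
    mul_div_assoc', mul_div_right_comm, div_eq_mul_inv |L|]
  gcongr
  exact bound.trans (by gcongr; exact le_abs_self L)

variable [FiniteDimensional ℝ E] [MeasurableSpace E] [BorelSpace E]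

theorem integrableOn_closedBall_ballProfile_sub [Nontrivial E] (hs : s ∈ Ioc (0 : ℝ) 1)
    (ha : 1 < ‖a‖) (x p : E) (R : ℝ) :
    IntegrableOn (fun ζ => (ballProfile s a x - ballProfile s a (x + inversion 0 1 ζ)) *
      ‖ζ‖ ^ (2 * s - finrank ℝ E)) (closedBall p R) := by
  have hm : Measurable (inversion (0 : E) 1) := measurable_inversion _ _
  have hUm : Measurable (ballProfile s a) := (continuous_ballProfile hs.1 ha).measurable
  have base : IntegrableOn (fun ζ : E => ‖ζ‖ ^ (2 * s - finrank ℝ E)) (closedBall p R) :=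
    (integrableOn_closedBall_norm_rpow hs (lt_max_of_lt_right (lt_add_one ‖p‖))).mono_set
      (closedBall_subset_closedBall (le_max_left R _))
  refine Integrable.bdd_mul base (c := (‖a‖ - 1) ^ (-(finrank ℝ E : ℝ)) +
    (‖a‖ - 1) ^ (-(finrank ℝ E : ℝ))) (Measurable.aestronglyMeasurable (by fun_prop)) ?_
  exact Eventually.of_forall fun ζ => (abs_sub _ _).trans
    (add_le_add (abs_ballProfile_le hs.1 ha _) (abs_ballProfile_le hs.1 ha _))

variable [Nontrivial E]

theorem tendsto_setIntegral_closedBall_ballProfile_sub (hs : s ∈ Ioo (0 : ℝ) 1)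
    (hx : ‖x‖ < 1) (ha : 1 < ‖a‖) :
    Tendsto (fun R => ∫ ζ in closedBall ((1 - ‖x‖ ^ 2)⁻¹ • x) R,
        (ballProfile s a x - ballProfile s a (x + inversion 0 1 ζ)) *
          ‖ζ‖ ^ (2 * s - finrank ℝ E)) atTop
      (𝓝 (ballProfile s a x * ((volume : Measure E).toSphere.real univ / 2 *
        (((‖a‖ ^ 2 - 1) / ((1 - ‖x‖ ^ 2) * ‖x - a‖ ^ 2)) ^ s *
          (Real.Gamma s * Real.Gamma (1 - s)))))) := by
  have hax : a ≠ x := ne_of_norm_lt (hx.trans ha)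
  have hδ := sq_sub_norm_inversion_sub_sq hx hax
  have hcr : 0 < (‖a‖ ^ 2 - 1) / ((1 - ‖x‖ ^ 2) * ‖x - a‖ ^ 2) :=
    div_pos (norm_sq_sub_one_pos ha) (mul_pos (one_sub_norm_sq_pos hx)
      (pow_pos (norm_sub_pos_of_norm_lt (hx.trans ha)) 2))
  have h := ((tendsto_two_mul_setIntegral_closedBall_sub_excess hs (sub_pos.1 (hδ ▸ hcr))
    (inv_pos.2 (one_sub_norm_sq_pos hx)).le).div_const 2).const_mul (ballProfile s a x)
  rw [hδ, mul_div_right_comm] at h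
  refine h.congr fun R => ?_
  rw [mul_div_cancel_left₀ _ two_ne_zero, ← integral_const_mul]
  refine setIntegral_congr_ae measurableSet_closedBall ?_
  filter_upwards [compl_mem_ae_iff.2 (measure_singleton (0 : E))] with ζ hζ _
  exact (ballProfile_sub_add_inversion_mul hx hax hζ).symm

theorem tendsto_pv_ballProfile (hs : s ∈ Ioo (0 : ℝ) 1) (hx : ‖x‖ < 1) (ha : 1 < ‖a‖) :
    Tendsto (fun ρ : ℝ => ∫ y in {y : E | ρ ≤ ‖y‖},
        (ballProfile s a x - ballProfile s a (x + y)) / ‖y‖ ^ ((finrank ℝ E : ℝ) + 2 * s)) (𝓝[>] 0)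
      (𝓝 ((volume : Measure E).toSphere.real univ / 2 * (Real.Gamma s * Real.Gamma (1 - s)) *
        ((‖a‖ ^ 2 - 1) ^ s * ‖x - a‖ ^ (-((finrank ℝ E : ℝ) + 2 * s))))) := by
  have hax : x ≠ a := (ne_of_norm_lt (hx.trans ha)).symm
  obtain ⟨L, hL, R₀, decay⟩ := exists_abs_sub_add_inversion_mul_rpow_le
    (differentiableAt_ballProfile (s := s) hx hax) (2 * s - finrank ℝ E)
  have shift := tendsto_setIntegral_closedBall_zero_sub_closedBall (μ := volume)
    (integrableOn_closedBall_ballProfile_sub (Ioo_subset_Ioc_self hs) ha x 0)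
    (by linarith [hs.2]) hL decay ((1 - ‖x‖ ^ 2)⁻¹ • x)
  have h := (shift.add (tendsto_setIntegral_closedBall_ballProfile_sub hs hx ha)).comp
    tendsto_inv_nhdsGT_zero
  simp only [sub_add_cancel, zero_add] at h
  rw [show ∀ A B C D : ℝ, A * (B * (C * D)) = B * D * (A * C) by intros; ring,
    ballProfile_mul_defect hx ha] at h
  refine h.congr' ?_
  filter_upwards [self_mem_nhdsWithin] with ρ hρ
  rw [setIntegral_le_norm_div_rpow hρ]
  simp only [Function.comp_apply]
  ring_nf

end PrincipalValue

section PoissonIntegral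

variable {E : Type*} [NormedAddCommGroup E] [InnerProductSpace ℝ E] {a e w ζ : E} {s R : ℝ}

theorem inversion_zero_one_of_norm_eq_one (he : ‖e‖ = 1) : inversion 0 1 e = e := by
  rw [inversion_zero_one_eq_smul, he, one_pow, inv_one, one_smul]

theorem ballProfile_zero (he : ‖e‖ = 1) : ballProfile s e 0 = 1 := by
  simp [ballProfile, he]

theorem inv_norm_pow_mul_ballProfile_inversion (he : ‖e‖ = 1) (hζ : ζ ≠ 0) :
    (1 / dist ζ 0) ^ (2 * finrank ℝ E) * ballProfile s e (inversion 0 1 ζ) =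
      (max (‖ζ‖ ^ 2 - 1) 0) ^ s * (‖ζ‖ ^ 2) ^ (-(s + (finrank ℝ E : ℝ) / 2)) *
        ‖ζ - e‖ ^ (-(finrank ℝ E : ℝ)) := by
  have hz : 0 < ‖ζ‖ := norm_pos_iff.2 hζ
  have h := ballProfile_add_inversion (s := s) (a := e) (x := 0) (by simp)
    (ne_of_norm_lt (by simp [he])) hζ
  simp only [zero_add, norm_zero, sub_zero, smul_zero, inv_one, one_pow, ne_eq,
    OfNat.ofNat_ne_zero, not_false_eq_true, zero_pow, ballProfile_zero he, one_mul,
    inversion_zero_one_of_norm_eq_one he] at h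
  have exponent : ‖ζ‖ ^ (2 * -(s + (finrank ℝ E : ℝ) / 2)) * ‖ζ‖ ^ (2 * s - finrank ℝ E) =
      (1 / ‖ζ‖) ^ (2 * finrank ℝ E) := by
    rw [← Real.rpow_add hz, one_div, inv_pow, ← Real.rpow_natCast, ← Real.rpow_neg hz.le]
    push_cast
    ring_nf
  rw [dist_zero_right, ← exponent, sq_rpow hz.le, mul_right_comm _ (_ ^ (2 * _)), ← h]
  ring

theorem one_sub_norm_inversion_sq (hwa : w ≠ a) (hR : R ^ 2 = ‖a‖ ^ 2 - 1) :
    1 - ‖inversion a R w‖ ^ 2 = (R / ‖w - a‖) ^ 2 * (1 - ‖w‖ ^ 2) := by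
  have hρ : ‖w - a‖ ≠ 0 := norm_ne_zero_iff.2 (sub_ne_zero.2 hwa)
  have expand : ‖w‖ ^ 2 = ‖w - a‖ ^ 2 + 2 * ⟪w - a, a⟫ + ‖a‖ ^ 2 := by
    rw [← norm_add_sq_real, sub_add_cancel]
  rw [inversion, vsub_eq_sub, vadd_eq_add, dist_eq_norm, norm_add_sq_real, norm_smul,
    real_inner_smul_left, Real.norm_of_nonneg (sq_nonneg _), expand, div_pow, hR]
  field_simp
  ring

theorem norm_inversion_eq_one (he : ‖e‖ = 1) (hea : e ≠ a) (hR : R ^ 2 = ‖a‖ ^ 2 - 1) :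
    ‖inversion a R e‖ = 1 := by
  have h := one_sub_norm_inversion_sq hea hR
  rw [he, one_pow, sub_self, mul_zero, sub_eq_zero] at h
  exact (pow_eq_one_iff_of_nonneg (norm_nonneg _) two_ne_zero).1 h.symm

theorem norm_inversion_sub (hwa : w ≠ a) (hea : e ≠ a) (hR : 0 < R) :
    ‖inversion a R w - e‖ = ‖e - a‖ * ‖w - inversion a R e‖ / ‖w - a‖ := by
  have hρ : 0 < ‖e - a‖ := norm_pos_iff.2 (sub_ne_zero.2 hea)
  have he' : inversion a R e ≠ a := by rwa [ne_eq, inversion_eq_center hR.ne']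
  have h := dist_inversion_inversion hwa he' R
  rw [inversion_inversion a hR.ne', dist_inversion_center] at h
  simp only [dist_eq_norm] at h
  rw [h]
  field_simp

theorem jacobian_exponents {ρ : ℝ} (hR : 0 < R) (hρ : 0 < ρ) (d : ℕ) (s : ℝ) :
    (R / ρ) ^ (2 * d) * (R / ρ) ^ (2 * s) / ρ ^ (-(d : ℝ)) * (R ^ 2 / ρ) ^ (-((d : ℝ) + 2 * s)) =
      (R ^ 2) ^ (-s) := by
  rw [← Real.exp_log hR, ← Real.exp_log hρ]
  simp only [← Real.exp_nat_mul, ← Real.exp_sub, ← Real.exp_mul, ← Real.exp_add]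
  push_cast
  ring_nf

/-- The inversion in the sphere around `a` orthogonal to the unit sphere preserves the unit ball and
absorbs the kernel with pole `a`. -/
theorem jacobian_mul_ballProfile_inversion (ha : 1 < ‖a‖) (he : ‖e‖ = 1) (hwa : w ≠ a) (hR : 0 < R)
    (hRa : R ^ 2 = ‖a‖ ^ 2 - 1) :
    (R / dist w a) ^ (2 * finrank ℝ E) * (ballProfile s e (inversion a R w) *
        ‖inversion a R w - a‖ ^ (-((finrank ℝ E : ℝ) + 2 * s))) =
      (‖a‖ ^ 2 - 1) ^ (-s) * ‖e - a‖ ^ (-(finrank ℝ E : ℝ)) *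
        ballProfile s (inversion a R e) w := by
  have hea : e ≠ a := (ne_of_norm_lt (he ▸ ha)).symm
  have hρ : 0 < ‖w - a‖ := norm_pos_iff.2 (sub_ne_zero.2 hwa)
  have hρe : 0 < ‖e - a‖ := norm_pos_iff.2 (sub_ne_zero.2 hea)
  have hc : ‖inversion a R w - a‖ = R ^ 2 / ‖w - a‖ := by
    rw [← dist_eq_norm, dist_inversion_center, dist_eq_norm]
  have hmax : max ((R / ‖w - a‖) ^ 2 * (1 - ‖w‖ ^ 2)) 0 =
      (R / ‖w - a‖) ^ 2 * max (1 - ‖w‖ ^ 2) 0 := by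
    rw [mul_max_of_nonneg _ _ (sq_nonneg _), mul_zero]
  have hm : 0 ≤ max (1 - ‖w‖ ^ 2) 0 := le_max_right _ _
  rw [ballProfile, ballProfile, one_sub_norm_inversion_sq hwa hRa, norm_inversion_sub hwa hea hR,
    hc, hmax, ← hRa, ← jacobian_exponents hR hρ (finrank ℝ E), dist_eq_norm,
    Real.mul_rpow (by positivity) hm, sq_rpow (div_pos hR hρ).le,
    Real.div_rpow (mul_nonneg hρe.le (norm_nonneg _)) hρ.le, Real.mul_rpow hρe.le (norm_nonneg _)]
  ring

variable [MeasurableSpace E] [BorelSpace E]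

theorem measurable_ballProfile (s : ℝ) (a : E) : Measurable (ballProfile s a) := by
  unfold ballProfile
  fun_prop

variable [FiniteDimensional ℝ E] [Nontrivial E]

theorem two_mul_lintegral_ballProfile (hs : 0 < s) (he : ‖e‖ = 1) :
    2 * ∫⁻ z, ENNReal.ofReal (ballProfile s e z) =
      ENNReal.ofReal (Real.Gamma s * Real.Gamma ((finrank ℝ E : ℝ) / 2) /
        Real.Gamma (s + (finrank ℝ E : ℝ) / 2)) * (volume : Measure E).toSphere univ := by
  set F : ℝ → ℝ≥0∞ := fun v =>
    ENNReal.ofReal ((max (v - 1) 0) ^ s * v ^ (-(s + (finrank ℝ E : ℝ) / 2))) with hF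
  have F_zero : ∀ v ≤ ‖e - 0‖ ^ 2, F v = 0 := fun v hv => by
    rw [sub_zero, he, one_pow] at hv
    simp only [hF]
    rw [max_eq_right (sub_nonpos.2 hv), Real.zero_rpow hs.ne', zero_mul, ENNReal.ofReal_zero]
  have radial := two_mul_lintegral_radial_mul_pole 0 e (by fun_prop : Measurable F) F_zero
  rw [← lintegral_inversion (0 : E) one_ne_zero]
  refine (congrArg (2 * ·) (lintegral_congr_ae ?_)).trans (radial.trans (congrArg (· * _) ?_))
  · filter_upwards [compl_mem_ae_iff.2 (measure_singleton (0 : E))] with ζ hζ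
    rw [← ENNReal.ofReal_mul (by positivity), inv_norm_pow_mul_ballProfile_inversion he hζ,
      sub_zero, ENNReal.ofReal_mul (by positivity)]
  · have hd : (0 : ℝ) < (finrank ℝ E : ℝ) / 2 := half_pos (Nat.cast_pos.2 finrank_pos)
    have beta := lintegral_rpow_mul_add_rpow hs hd one_pos
    rw [Real.one_rpow, mul_one] at beta
    rw [← beta, sub_zero, he, one_pow]
    refine setLIntegral_congr_fun measurableSet_Ioi fun y (hy : 0 < y) => ?_
    rw [hF, ← ENNReal.ofReal_mul (by positivity), add_sub_cancel_left, max_eq_left hy.le,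
      ← mul_assoc, Real.rpow_sub_one hy.ne', one_div_mul_eq_div, add_comm 1 y]

theorem integrable_ballProfile (hs : 0 < s) (he : ‖e‖ = 1) : Integrable (ballProfile s e) :=
  integrable_of_two_mul_lintegral_le (measurable_ballProfile s e).aestronglyMeasurable
    (ballProfile_nonneg s e) (measure_ne_top _ _) (two_mul_lintegral_ballProfile hs he).le

theorem two_mul_integral_ballProfile (hs : 0 < s) (he : ‖e‖ = 1) :
    2 * ∫ z, ballProfile s e z = (volume : Measure E).toSphere.real univ *
      (Real.Gamma s * Real.Gamma ((finrank ℝ E : ℝ) / 2) /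
        Real.Gamma (s + (finrank ℝ E : ℝ) / 2)) :=
  two_mul_integral_eq_of_lintegral (measurable_ballProfile s e).aestronglyMeasurable
    (ballProfile_nonneg s e)
    (div_nonneg (mul_nonneg (Real.Gamma_nonneg_of_nonneg hs.le)
      (Real.Gamma_nonneg_of_nonneg (by positivity))) (Real.Gamma_nonneg_of_nonneg (by positivity)))
    (measure_ne_top _ _) (two_mul_lintegral_ballProfile hs he)

theorem two_mul_integral_ballProfile_mul (hs : 0 < s) (ha : 1 < ‖a‖) (he : ‖e‖ = 1) :
    2 * ∫ z, ballProfile s e z * ‖z - a‖ ^ (-((finrank ℝ E : ℝ) + 2 * s)) =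
      (‖a‖ ^ 2 - 1) ^ (-s) * ‖e - a‖ ^ (-(finrank ℝ E : ℝ)) *
        ((volume : Measure E).toSphere.real univ * (Real.Gamma s *
          Real.Gamma ((finrank ℝ E : ℝ) / 2) / Real.Gamma (s + (finrank ℝ E : ℝ) / 2))) := by
  have hR : 0 < √(‖a‖ ^ 2 - 1) := Real.sqrt_pos.2 (norm_sq_sub_one_pos ha)
  have hRa : √(‖a‖ ^ 2 - 1) ^ 2 = ‖a‖ ^ 2 - 1 := Real.sq_sqrt (norm_sq_sub_one_pos ha).le
  have he' := norm_inversion_eq_one he (ne_of_norm_lt (he ▸ ha)).symm hRa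
  rw [← integral_inversion a hR.ne', ← two_mul_integral_ballProfile hs he', mul_left_comm]
  refine congrArg (2 * ·) ?_
  rw [← integral_const_mul]
  refine integral_congr_ae ?_
  filter_upwards [compl_mem_ae_iff.2 (measure_singleton a)] with w hw
  exact jacobian_mul_ballProfile_inversion ha he hw hR hRa

end PoissonIntegral

section Constants

variable {n : ℕ} {s : ℝ}

theorem half_toSphere_real_univ_euclideanSpace [NeZero n] :
    (volume : Measure (EuclideanSpace ℝ (Fin n))).toSphere.real univ / 2 =
      Real.pi ^ ((n : ℝ) / 2) / Real.Gamma ((n : ℝ) / 2) := by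
  have hn0 : (0 : ℝ) < n := by exact_mod_cast NeZero.pos n
  have := Real.Gamma_pos_of_pos (half_pos hn0)
  rw [measureReal_def, Measure.toSphere_apply_univ, EuclideanSpace.volume_ball,
    finrank_euclideanSpace_fin, Fintype.card_fin, Real.Gamma_add_one (half_pos hn0).ne',
    Real.sqrt_eq_rpow, ← Real.rpow_natCast, ← Real.rpow_mul Real.pi_pos.le]
  simp only [ENNReal.ofReal_one, one_pow, one_mul, ENNReal.toReal_mul, ENNReal.toReal_natCast]
  rw [ENNReal.toReal_ofReal (by positivity), show (1 / 2 : ℝ) * n = n / 2 by ring]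
  field_simp

theorem fracC_pos (n : ℕ) (hs : s ∈ Ioo 0 1) : 0 < fracC n s := by
  have hs0 := hs.1
  have hG₁ := Real.Gamma_pos_of_pos (sub_pos.2 hs.2)
  have : 0 < Real.Gamma ((n : ℝ) / 2 + s) := Real.Gamma_pos_of_pos (by positivity)
  unfold fracC
  positivity

/-- The dimensional factor by which `(-Δ)^s` scales a `ballProfile` with pole outside the
closed unit ball; see `hasFracLap_ballProfile`. -/
noncomputable def profileC (n : ℕ) (s : ℝ) : ℝ :=
  fracC n s * (Real.pi ^ ((n : ℝ) / 2) / Real.Gamma ((n : ℝ) / 2) *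
    (Real.Gamma s * Real.Gamma (1 - s)))

variable [NeZero n]

theorem profileC_pos (hs : s ∈ Ioo 0 1) : 0 < profileC n s := by
  have hn0 : (0 : ℝ) < n := by exact_mod_cast NeZero.pos n
  have hC := fracC_pos n hs
  have hG₁ := Real.Gamma_pos_of_pos (sub_pos.2 hs.2)
  have := Real.Gamma_pos_of_pos hs.1
  have := Real.Gamma_pos_of_pos (half_pos hn0)
  unfold profileC
  positivity

theorem kappaC_div_mul_eq_inv_profileC (hs : s ∈ Ioo 0 1) :
    kappaC n s / s * (Real.pi ^ ((n : ℝ) / 2) / Real.Gamma ((n : ℝ) / 2) *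
      (Real.Gamma s * Real.Gamma ((n : ℝ) / 2) / Real.Gamma (s + (n : ℝ) / 2))) =
      (profileC n s)⁻¹ := by
  have hn0 : (0 : ℝ) < n := by exact_mod_cast NeZero.pos n
  have hs0 := hs.1
  have hG₁ := Real.Gamma_pos_of_pos (sub_pos.2 hs.2)
  have := Real.Gamma_pos_of_pos hs.1
  have := Real.Gamma_pos_of_pos (half_pos hn0)
  have := Real.Gamma_pos_of_pos (add_pos hs.1 (half_pos hn0))
  have := Real.rpow_pos_of_pos Real.pi_pos ((n : ℝ) / 2)
  unfold profileC kappaC fracC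
  rw [add_comm ((n : ℝ) / 2) s]
  field_simp

theorem hasFracLap_ballProfile (hs : s ∈ Ioo 0 1) {a x : EuclideanSpace ℝ (Fin n)}
    (hx : ‖x‖ < 1) (ha : 1 < ‖a‖) :
    HasFracLap n s (ballProfile s a) x
      (profileC n s * ((‖a‖ ^ 2 - 1) ^ s * ‖x - a‖ ^ (-((n : ℝ) + 2 * s)))) := by
  have h := (tendsto_pv_ballProfile hs hx ha).const_mul (fracC n s)
  rw [half_toSphere_real_univ_euclideanSpace, finrank_euclideanSpace_fin] at h
  simpa only [HasFracLap, profileC, mul_assoc, neg_add] using h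

theorem kappaC_div_mul_integral_ballProfile_mul (hs : s ∈ Ioo 0 1)
    {a e : EuclideanSpace ℝ (Fin n)} (ha : 1 < ‖a‖) (he : ‖e‖ = 1) :
    kappaC n s / s * ∫ z, ballProfile s e z * ‖z - a‖ ^ (-((n : ℝ) + 2 * s)) =
      (profileC n s * (‖a‖ ^ 2 - 1) ^ s)⁻¹ * ‖e - a‖ ^ (-(n : ℝ)) := by
  have h := two_mul_integral_ballProfile_mul hs.1 ha he
  rw [finrank_euclideanSpace_fin] at h
  rw [mul_inv, ← kappaC_div_mul_eq_inv_profileC hs, ← half_toSphere_real_univ_euclideanSpace,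
    ← Real.rpow_neg (norm_sq_sub_one_pos ha).le, mul_assoc, mul_assoc]
  congr 1
  linear_combination h / 2

end Constants

section FracLap

theorem integrableOn_div_norm_rpow {E : Type*} [NormedAddCommGroup E] [NormedSpace ℝ E]
    [FiniteDimensional ℝ E] [MeasurableSpace E] [BorelSpace E] {μ : Measure E} [μ.IsAddHaarMeasure]
    {q ρ M : ℝ} (hq : (finrank ℝ E : ℝ) < q) (hρ : 0 < ρ) {g : E → ℝ} (hg : Measurable g)
    (hM : ∀ y, |g y| ≤ M) : IntegrableOn (fun y => g y / ‖y‖ ^ q) {y : E | ρ ≤ ‖y‖} μ := by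
  have majorant : Integrable (fun y : E => M * (ρ / (1 + ρ)) ^ (-q) * (1 + ‖y‖) ^ (-q)) μ :=
    (integrable_one_add_norm hq).const_mul _
  refine majorant.integrableOn.mono' (Measurable.aestronglyMeasurable (by fun_prop)) ?_
  filter_upwards [ae_restrict_mem (measurableSet_le measurable_const measurable_norm)]
    with y (hy : ρ ≤ ‖y‖)
  have : 0 ≤ q := (Nat.cast_nonneg _).trans hq.le
  have comparable : ρ / (1 + ρ) * (1 + ‖y‖) ≤ ‖y‖ := by
    rw [div_mul_eq_mul_div, div_le_iff₀ (by linarith)]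
    nlinarith
  rw [norm_div, Real.norm_eq_abs, Real.norm_of_nonneg (by positivity), div_eq_mul_inv,
    ← Real.rpow_neg (norm_nonneg _), mul_assoc, ← Real.mul_rpow (by positivity) (by positivity)]
  exact mul_le_mul (hM y) (Real.rpow_le_rpow_of_nonpos (by positivity) comparable (by linarith))
    (by positivity) ((abs_nonneg _).trans (hM y))

variable {n : ℕ} {s : ℝ} {x : EuclideanSpace ℝ (Fin n)}
  {u v : EuclideanSpace ℝ (Fin n) → ℝ} {L L' : ℝ}

theorem integrableOn_sub_div_norm_rpow (hs : 0 < s) (hu : Continuous u)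
    (hub : ∃ M, ∀ x, |u x| ≤ M) (x : EuclideanSpace ℝ (Fin n)) {ρ : ℝ} (hρ : 0 < ρ) :
    IntegrableOn (fun y => (u x - u (x + y)) / ‖y‖ ^ ((n : ℝ) + 2 * s)) {y | ρ ≤ ‖y‖} := by
  obtain ⟨M, hM⟩ := hub
  refine integrableOn_div_norm_rpow (M := M + M) ?_ hρ (by fun_prop) fun y => ?_
  · rw [finrank_euclideanSpace_fin]
    linarith
  · exact (abs_sub _ _).trans (add_le_add (hM _) (hM _))

theorem HasFracLap.add (hs : 0 < s) (hu : Continuous u) (hub : ∃ M, ∀ x, |u x| ≤ M)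
    (hv : Continuous v) (hvb : ∃ M, ∀ x, |v x| ≤ M)
    (hL : HasFracLap n s u x L) (hL' : HasFracLap n s v x L') :
    HasFracLap n s (u + v) x (L + L') := by
  refine (Tendsto.add hL hL').congr' ?_
  filter_upwards [self_mem_nhdsWithin] with ρ hρ
  rw [← mul_add, ← integral_add (integrableOn_sub_div_norm_rpow hs hu hub x hρ)
    (integrableOn_sub_div_norm_rpow hs hv hvb x hρ)]
  refine congrArg (fracC n s * ·) (integral_congr_ae (.of_forall fun y => ?_))
  simp only [Pi.add_apply]
  ring

theorem HasFracLap.const_smul (c : ℝ) (hL : HasFracLap n s u x L) :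
    HasFracLap n s (c • u) x (c * L) := by
  refine (Tendsto.const_mul c hL).congr fun ρ => ?_
  rw [mul_left_comm, ← integral_const_mul]
  refine congrArg (fracC n s * ·) (integral_congr_ae (.of_forall fun y => ?_))
  simp only [Pi.smul_apply, smul_eq_mul]
  ring

theorem HasFracLap.nonneg_of_forall_le (hs : s ∈ Ioo 0 1) (hx : ∀ y, u y ≤ u x)
    (hL : HasFracLap n s u x L) : 0 ≤ L :=
  ge_of_tendsto' hL fun _ => mul_nonneg (fracC_pos n hs).le <|
    integral_nonneg fun _ => div_nonneg (sub_nonneg.2 (hx _)) (by positivity)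

end FracLap

section Dirichlet

/-- The Dirichlet problem on the unit ball: `u` is continuous, vanishes outside the ball, and
satisfies `(-Δ)^s u = f` pointwise inside. -/
structure SolvesDirichlet (n : ℕ) (s : ℝ) (f u : EuclideanSpace ℝ (Fin n) → ℝ) : Prop where
  continuous : Continuous u
  eq_zero : ∀ x ∉ ball (0 : EuclideanSpace ℝ (Fin n)) 1, u x = 0
  hasFracLap : ∀ x ∈ ball (0 : EuclideanSpace ℝ (Fin n)) 1, HasFracLap n s u x (f x)

namespace SolvesDirichlet

variable {n : ℕ} {s η : ℝ} {f g u v : EuclideanSpace ℝ (Fin n) → ℝ}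

theorem exists_abs_le (hu : SolvesDirichlet n s f u) : ∃ M, ∀ x, |u x| ≤ M := by
  obtain ⟨M, hM⟩ := (isCompact_closedBall (0 : EuclideanSpace ℝ (Fin n))
    1).exists_bound_of_continuousOn hu.continuous.continuousOn
  refine ⟨max M 0, fun x => ?_⟩
  by_cases hx : x ∈ ball (0 : EuclideanSpace ℝ (Fin n)) 1
  · exact (hM x (ball_subset_closedBall hx)).trans (le_max_left _ _)
  · simp [hu.eq_zero x hx]

theorem add (hs : 0 < s) (hu : SolvesDirichlet n s f u) (hv : SolvesDirichlet n s g v) :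
    SolvesDirichlet n s (f + g) (u + v) where
  continuous := hu.continuous.add hv.continuous
  eq_zero x hx := by simp [hu.eq_zero x hx, hv.eq_zero x hx]
  hasFracLap x hx := (hu.hasFracLap x hx).add hs hu.continuous hu.exists_abs_le hv.continuous
    hv.exists_abs_le (hv.hasFracLap x hx)

theorem const_smul (c : ℝ) (hu : SolvesDirichlet n s f u) :
    SolvesDirichlet n s (c • f) (c • u) where
  continuous := hu.continuous.const_smul c
  eq_zero x hx := by simp [hu.eq_zero x hx]
  hasFracLap x hx := (hu.hasFracLap x hx).const_smul c

theorem sub (hs : 0 < s) (hu : SolvesDirichlet n s f u) (hv : SolvesDirichlet n s g v) :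
    SolvesDirichlet n s (f - g) (u - v) := by
  simpa only [neg_one_smul, ← sub_eq_add_neg] using hu.add hs (hv.const_smul (-1))

theorem nonpos_of_neg (hs : s ∈ Ioo 0 1) (hu : SolvesDirichlet n s f u)
    (hf : ∀ x ∈ ball (0 : EuclideanSpace ℝ (Fin n)) 1, f x < 0)
    (x : EuclideanSpace ℝ (Fin n)) : u x ≤ 0 := by
  by_contra! hpos
  have mem_ball_of_pos : ∀ y, 0 < u y → y ∈ ball (0 : EuclideanSpace ℝ (Fin n)) 1 :=
    fun y hy => by_contra fun h => hy.ne' (hu.eq_zero y h)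
  obtain ⟨z, -, hz⟩ := (isCompact_closedBall (0 : EuclideanSpace ℝ (Fin n)) 1).exists_isMaxOn
    ⟨x, ball_subset_closedBall (mem_ball_of_pos x hpos)⟩ hu.continuous.continuousOn
  have hzpos : 0 < u z := hpos.trans_le (hz (ball_subset_closedBall (mem_ball_of_pos x hpos)))
  have hmax : ∀ y, u y ≤ u z := fun y => by
    rcases le_or_gt (u y) 0 with hy | hy
    · exact hy.trans hzpos.le
    · exact hz (ball_subset_closedBall (mem_ball_of_pos y hy))
  have hzmem := mem_ball_of_pos z hzpos
  exact (hf z hzmem).not_ge ((hu.hasFracLap z hzmem).nonneg_of_forall_le hs hmax)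

theorem le_of_lt (hs : s ∈ Ioo 0 1) (hu : SolvesDirichlet n s f u)
    (hv : SolvesDirichlet n s g v)
    (hfg : ∀ x ∈ ball (0 : EuclideanSpace ℝ (Fin n)) 1, f x < g x)
    (x : EuclideanSpace ℝ (Fin n)) : u x ≤ v x :=
  sub_nonpos.1 ((hu.sub hs.1 hv).nonpos_of_neg hs (fun y hy => sub_neg.2 (hfg y hy)) x)

variable [NeZero n]

theorem inv_smul_ballProfile (hs : s ∈ Ioo 0 1) {a : EuclideanSpace ℝ (Fin n)} (ha : 1 < ‖a‖) :
    SolvesDirichlet n s (fun x => ‖x - a‖ ^ (-((n : ℝ) + 2 * s)))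
      ((profileC n s * (‖a‖ ^ 2 - 1) ^ s)⁻¹ • ballProfile s a) where
  continuous := (continuous_ballProfile hs.1 ha).const_smul _
  eq_zero x hx := by
    simp [ballProfile_of_one_le_norm hs.1.ne' a (show 1 ≤ ‖x‖ by simpa using hx)]
  hasFracLap x hx := by
    have hc : profileC n s * (‖a‖ ^ 2 - 1) ^ s ≠ 0 :=
      (mul_pos (profileC_pos hs) (Real.rpow_pos_of_pos (norm_sq_sub_one_pos ha) s)).ne'
    have h := (hasFracLap_ballProfile hs (mem_ball_zero_iff.1 hx) ha).const_smul
      (profileC n s * (‖a‖ ^ 2 - 1) ^ s)⁻¹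
    rwa [← mul_assoc (profileC n s), inv_mul_cancel_left₀ hc] at h

theorem exists_barrier (hs : s ∈ Ioo 0 1) :
    ∃ b g : EuclideanSpace ℝ (Fin n) → ℝ, SolvesDirichlet n s g b ∧
      (∀ x ∈ ball (0 : EuclideanSpace ℝ (Fin n)) 1, 1 < g x) ∧
      ∃ C > 0, ∀ x, b x ≤ C * (max (1 - ‖x‖ ^ 2) 0) ^ s := by
  obtain ⟨a, ha⟩ := exists_norm_eq (EuclideanSpace ℝ (Fin n)) (zero_le_two (α := ℝ))
  have ha1 : 1 < ‖a‖ := by rw [ha]; norm_num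
  set c := (profileC n s * (‖a‖ ^ 2 - 1) ^ s)⁻¹
  have hc : 0 < c := inv_pos.2 (mul_pos (profileC_pos hs)
    (Real.rpow_pos_of_pos (norm_sq_sub_one_pos ha1) s))
  have hs0 := hs.1
  refine ⟨_, _, (inv_smul_ballProfile hs ha1).const_smul (3 ^ ((n : ℝ) + 2 * s)),
    fun x hx => ?_, 3 ^ ((n : ℝ) + 2 * s) * (c * (‖a‖ - 1) ^ (-(n : ℝ))), ?_, fun x => ?_⟩
  · have hx1 := mem_ball_zero_iff.1 hx
    have hdist : 0 < ‖x - a‖ := norm_sub_pos_of_norm_lt (hx1.trans ha1)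
    have hdist3 : ‖x - a‖ < 3 := (norm_sub_le _ _).trans_lt (by rw [ha]; linarith)
    rw [Pi.smul_apply, smul_eq_mul, Real.rpow_neg hdist.le, ← div_eq_mul_inv,
      one_lt_div (by positivity)]
    exact Real.rpow_lt_rpow hdist.le hdist3 (by positivity)
  · have : 0 < ‖a‖ - 1 := sub_pos.2 ha1
    positivity
  · have h := ballProfile_le hs0.ne' ha1 x
    rw [finrank_euclideanSpace_fin] at h
    simp only [Pi.smul_apply, smul_eq_mul, mul_assoc]
    gcongr

theorem exists_abs_le_mul_rpow (n : ℕ) [NeZero n] (hs : s ∈ Ioo 0 1) :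
    ∃ C > 0, ∀ (f u : EuclideanSpace ℝ (Fin n) → ℝ) (η : ℝ), 0 < η → SolvesDirichlet n s f u →
      (∀ x ∈ ball (0 : EuclideanSpace ℝ (Fin n)) 1, |f x| ≤ η) →
      ∀ x, |u x| ≤ C * η * (max (1 - ‖x‖ ^ 2) 0) ^ s := by
  obtain ⟨b, g, hb, hg, C, hC, hbC⟩ := exists_barrier (n := n) hs
  refine ⟨C, hC, fun f u η hη hu hf x => ?_⟩
  have hηg : ∀ y ∈ ball (0 : EuclideanSpace ℝ (Fin n)) 1, η < (η • g) y := fun y hy => by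
    simpa using mul_lt_mul_of_pos_left (hg y hy) hη
  have upper : u x ≤ η * b x := hu.le_of_lt hs (hb.const_smul η)
    (fun y hy => ((le_abs_self _).trans (hf y hy)).trans_lt (hηg y hy)) x
  have lower : -1 * u x ≤ η * b x := (hu.const_smul (-1)).le_of_lt hs (hb.const_smul η)
    (fun y hy => lt_of_le_of_lt (by simpa using (neg_le_abs _).trans (hf y hy)) (hηg y hy)) x
  calc |u x| ≤ η * b x := abs_le.2 ⟨by linarith, upper⟩
    _ ≤ η * (C * (max (1 - ‖x‖ ^ 2) 0) ^ s) := by gcongr; exact hbC x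
    _ = _ := by ring

end SolvesDirichlet

end Dirichlet

section UniformClosure

variable {X : Type*}

/-- The functions that elements of `S` approximate uniformly on `K`. -/
def uniformClosureOn (S : Submodule ℝ (X → ℝ)) (K : Set X) : Submodule ℝ (X → ℝ) where
  carrier := {f | ∀ η > 0, ∃ g ∈ S, ∀ x ∈ K, |f x - g x| ≤ η}
  zero_mem' := fun η hη => ⟨0, S.zero_mem, fun x _ => by simpa using hη.le⟩
  add_mem' := by
    intro f f' hf hf' η hη
    obtain ⟨g, hg, hfg⟩ := hf (η / 2) (half_pos hη)
    obtain ⟨g', hg', hfg'⟩ := hf' (η / 2) (half_pos hη)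
    refine ⟨g + g', S.add_mem hg hg', fun x hx => ?_⟩
    calc |(f + f') x - (g + g') x| = |(f x - g x) + (f' x - g' x)| :=
          congrArg abs (add_sub_add_comm _ _ _ _)
      _ ≤ η / 2 + η / 2 := (abs_add_le _ _).trans (add_le_add (hfg x hx) (hfg' x hx))
      _ = η := add_halves η
  smul_mem' := by
    intro c f hf η hη
    obtain ⟨g, hg, hfg⟩ := hf (η / (|c| + 1)) (by positivity)
    refine ⟨c • g, S.smul_mem c hg, fun x hx => ?_⟩
    calc |(c • f) x - (c • g) x| = |c| * |f x - g x| := by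
          rw [← abs_mul, Pi.smul_apply, Pi.smul_apply, smul_eq_mul, smul_eq_mul, mul_sub]
      _ ≤ (|c| + 1) * (η / (|c| + 1)) :=
          mul_le_mul (le_add_of_nonneg_right zero_le_one) (hfg x hx) (abs_nonneg _) (by positivity)
      _ = η := by field_simp

variable {S T : Submodule ℝ (X → ℝ)} {K : Set X} {f g : X → ℝ}

theorem le_uniformClosureOn : S ≤ uniformClosureOn S K := fun g hg η hη =>
  ⟨g, hg, fun x _ => by simpa using hη.le⟩

theorem mem_uniformClosureOn_of_forall_exists
    (h : ∀ η > 0, ∃ g ∈ uniformClosureOn S K, ∀ x ∈ K, |f x - g x| ≤ η) :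
    f ∈ uniformClosureOn S K := by
  intro η hη
  obtain ⟨g, hg, hfg⟩ := h (η / 2) (half_pos hη)
  obtain ⟨g', hg', hgg'⟩ := hg (η / 2) (half_pos hη)
  refine ⟨g', hg', fun x hx => ?_⟩
  calc |f x - g' x| ≤ |f x - g x| + |g x - g' x| := abs_sub_le _ _ _
    _ ≤ η / 2 + η / 2 := add_le_add (hfg x hx) (hgg' x hx)
    _ = η := add_halves η

theorem mem_uniformClosureOn_congr (h : EqOn f g K) (hg : g ∈ uniformClosureOn S K) :
    f ∈ uniformClosureOn S K :=
  mem_uniformClosureOn_of_forall_exists fun η hη =>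
    ⟨g, hg, fun x hx => by simpa [h hx] using hη.le⟩

theorem uniformClosureOn_le_uniformClosureOn (h : S ≤ uniformClosureOn T K) :
    uniformClosureOn S K ≤ uniformClosureOn T K := fun _ hf =>
  mem_uniformClosureOn_of_forall_exists fun η hη => by
    obtain ⟨g, hg, hfg⟩ := hf η hη
    exact ⟨g, h hg, hfg⟩

theorem deriv_mem_uniformClosureOn [PseudoMetricSpace X] (hK : IsCompact K) {δ : ℝ} (hδ : 0 < δ)
    {F F' : ℝ → X → ℝ} (hF : ∀ t ∈ Icc 0 δ, F t ∈ uniformClosureOn S K)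
    (hd : ∀ t ∈ Icc 0 δ, ∀ x ∈ K, HasDerivAt (fun t => F t x) (F' t x) t)
    (hc : ContinuousOn (Function.uncurry F') (Icc 0 δ ×ˢ K)) :
    F' 0 ∈ uniformClosureOn S K := by
  refine mem_uniformClosureOn_of_forall_exists fun η hη => ?_
  obtain ⟨r, hr, hF'r⟩ := Metric.uniformContinuousOn_iff.1
    ((isCompact_Icc.prod hK).uniformContinuousOn_of_continuous hc) η hη
  set τ := min δ (r / 2)
  have hτ0 : 0 < τ := lt_min hδ (half_pos hr)
  have hτδ : τ ≤ δ := min_le_left _ _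
  have hτr : τ < r := (min_le_right _ _).trans_lt (half_lt_self hr)
  refine ⟨τ⁻¹ • (F τ - F 0), Submodule.smul_mem _ _ (Submodule.sub_mem _
    (hF τ ⟨hτ0.le, hτδ⟩) (hF 0 ⟨le_rfl, hδ.le⟩)), fun x hx => ?_⟩
  obtain ⟨c, hc, hslope⟩ := exists_hasDerivAt_eq_slope (fun t => F t x) (fun t => F' t x) hτ0
    (fun t ht => (hd t ⟨ht.1, ht.2.trans hτδ⟩ x hx).continuousAt.continuousWithinAt)
    (fun t ht => hd t ⟨ht.1.le, ht.2.le.trans hτδ⟩ x hx)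
  have hdist : dist ((0 : ℝ), x) (c, x) < r := by
    rw [Prod.dist_eq, dist_self, Real.dist_eq, zero_sub, abs_neg, abs_of_pos hc.1]
    exact max_lt (hc.2.trans hτr) hr
  have h := hF'r (0, x) ⟨⟨le_rfl, hδ.le⟩, hx⟩ (c, x) ⟨⟨hc.1.le, hc.2.le.trans hτδ⟩, hx⟩ hdist
  simp only [Function.uncurry, Real.dist_eq, hslope] at h
  simpa [div_eq_inv_mul] using h.le

end UniformClosure

section PoleDensity

/-- The span of the functions `x ↦ ‖x - a‖ ^ (-2m)` with poles `a` outside the closed unit ball.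
They are written as powers of `‖x - a‖ ^ 2`, which is differentiable in `a`. -/
def poleSpan (E : Type*) [SeminormedAddCommGroup E] (m : ℝ) : Submodule ℝ (E → ℝ) :=
  Submodule.span ℝ ((fun a x => (‖x - a‖ ^ 2) ^ (-m)) '' {a | 1 < ‖a‖})

theorem pole_mem_poleSpan {E : Type*} [SeminormedAddCommGroup E] (m : ℝ) {a : E} (ha : 1 < ‖a‖) :
    (fun x => (‖x - a‖ ^ 2) ^ (-m)) ∈ poleSpan E m :=
  Submodule.subset_span ⟨a, ha, rfl⟩

theorem norm_sub_sq_mem_Icc {E : Type*} [SeminormedAddCommGroup E] {x a : E}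
    (hx : x ∈ closedBall (0 : E) 1) (ha : 1 < ‖a‖) :
    ‖x - a‖ ^ 2 ∈ Icc ((‖a‖ - 1) ^ 2) ((‖a‖ + 1) ^ 2) := by
  have hx1 : ‖x‖ ≤ 1 := mem_closedBall_zero_iff.1 hx
  have lower : ‖a‖ - 1 ≤ ‖x - a‖ := by linarith [norm_sub_norm_le a x, norm_sub_rev a x]
  have upper : ‖x - a‖ ≤ ‖a‖ + 1 := by linarith [norm_sub_le x a]
  exact ⟨pow_le_pow_left₀ (sub_pos.2 ha).le lower 2, pow_le_pow_left₀ (norm_nonneg _) upper 2⟩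

theorem ne_of_mem_closedBall_of_one_lt_norm {E : Type*} [SeminormedAddCommGroup E] {x b : E}
    (hx : x ∈ closedBall (0 : E) 1) (hb : 1 < ‖b‖) : x ≠ b := by
  rintro rfl
  exact (mem_closedBall_zero_iff.1 hx).not_gt hb

theorem one_lt_norm_add_smul {E : Type*} [SeminormedAddCommGroup E] [NormedSpace ℝ E] {a v : E}
    {t : ℝ} (ha : 1 < ‖a‖) (hv : ‖v‖ = 1) (ht : t ∈ Icc 0 ((‖a‖ - 1) / 2)) :
    1 < ‖a + t • v‖ := by
  have h : ‖a‖ - ‖t • v‖ ≤ ‖a + t • v‖ := by simpa using norm_sub_norm_le a (-(t • v))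
  rw [norm_smul, hv, mul_one, Real.norm_of_nonneg ht.1] at h
  linarith [ht.2]

variable {E : Type*} [NormedAddCommGroup E] [InnerProductSpace ℝ E]

theorem hasDerivAt_norm_sub_sq_rpow (m : ℝ) {a v x : E} {t : ℝ} (h : x ≠ a + t • v) :
    HasDerivAt (fun t : ℝ => (‖x - (a + t • v)‖ ^ 2) ^ (-m))
      (2 * m * ⟪x - (a + t • v), v⟫ * (‖x - (a + t • v)‖ ^ 2) ^ (-(m + 1))) t := by
  have line : HasDerivAt (fun t : ℝ => x - (a + t • v)) (-v) t := by
    simpa using (((hasDerivAt_id t).smul_const v).const_add a).const_sub x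
  have hne : ‖x - (a + t • v)‖ ^ 2 ≠ 0 := pow_ne_zero 2 (norm_ne_zero_iff.2 (sub_ne_zero.2 h))
  refine (line.norm_sq.rpow_const (p := -m) (Or.inl hne)).congr_deriv ?_
  rw [inner_neg_right, neg_add']
  ring

theorem hasDerivAt_inner_mul_norm_sub_sq_rpow (m : ℝ) {a v x : E} {t : ℝ} (h : x ≠ a + t • v)
    (hv : ‖v‖ = 1) :
    HasDerivAt (fun t : ℝ => ⟪x - (a + t • v), v⟫ * (‖x - (a + t • v)‖ ^ 2) ^ (-m))
      (2 * m * ⟪x - (a + t • v), v⟫ ^ 2 * (‖x - (a + t • v)‖ ^ 2) ^ (-(m + 1)) -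
        (‖x - (a + t • v)‖ ^ 2) ^ (-m)) t := by
  have line : HasDerivAt (fun t : ℝ => x - (a + t • v)) (-v) t := by
    simpa using (((hasDerivAt_id t).smul_const v).const_add a).const_sub x
  have inner : HasDerivAt (fun t : ℝ => ⟪x - (a + t • v), v⟫) (-1) t := by
    simpa [real_inner_self_eq_norm_sq, hv] using line.inner ℝ (hasDerivAt_const t v)
  exact (inner.mul (hasDerivAt_norm_sub_sq_rpow m h)).congr_deriv (by ring)

theorem continuousOn_norm_sub_sq_rpow {a v : E} (p : ℝ) (ha : 1 < ‖a‖) (hv : ‖v‖ = 1) :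
    ContinuousOn (fun y : ℝ × E => (‖y.2 - (a + y.1 • v)‖ ^ 2) ^ p)
      (Icc 0 ((‖a‖ - 1) / 2) ×ˢ closedBall 0 1) := by
  refine ContinuousOn.rpow_const (by fun_prop) fun y hy => Or.inl (pow_ne_zero 2 ?_)
  exact norm_ne_zero_iff.2 (sub_ne_zero.2
    (ne_of_mem_closedBall_of_one_lt_norm hy.2 (one_lt_norm_add_smul ha hv hy.1)))

variable [FiniteDimensional ℝ E] {m : ℝ} {a v : E}

theorem inner_mul_pole_mem (hm : m ≠ 0) (ha : 1 < ‖a‖) (hv : ‖v‖ = 1) :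
    (fun x => ⟪x - a, v⟫ * (‖x - a‖ ^ 2) ^ (-(m + 1))) ∈
      uniformClosureOn (poleSpan E m) (closedBall 0 1) := by
  have h := deriv_mem_uniformClosureOn (S := poleSpan E m) (isCompact_closedBall (0 : E) 1)
    (half_pos (sub_pos.2 ha))
    (F := fun t x => (‖x - (a + t • v)‖ ^ 2) ^ (-m))
    (F' := fun t x => 2 * m * ⟪x - (a + t • v), v⟫ * (‖x - (a + t • v)‖ ^ 2) ^ (-(m + 1)))
    (fun t ht => le_uniformClosureOn (pole_mem_poleSpan m (one_lt_norm_add_smul ha hv ht)))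
    (fun t ht x hx => hasDerivAt_norm_sub_sq_rpow m
      (ne_of_mem_closedBall_of_one_lt_norm hx (one_lt_norm_add_smul ha hv ht)))
    (ContinuousOn.mul (by fun_prop) (continuousOn_norm_sub_sq_rpow _ ha hv))
  convert Submodule.smul_mem _ (2 * m)⁻¹ h using 1
  ext x
  simp only [zero_smul, add_zero, Pi.smul_apply, smul_eq_mul]
  field_simp

theorem inner_sq_mul_pole_sub_pole_mem (hm : m ≠ 0) (ha : 1 < ‖a‖) (hv : ‖v‖ = 1) :
    (fun x => 2 * (m + 1) * ⟪x - a, v⟫ ^ 2 * (‖x - a‖ ^ 2) ^ (-(m + 1 + 1)) -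
      (‖x - a‖ ^ 2) ^ (-(m + 1))) ∈ uniformClosureOn (poleSpan E m) (closedBall 0 1) := by
  have h := deriv_mem_uniformClosureOn (S := poleSpan E m) (isCompact_closedBall (0 : E) 1)
    (half_pos (sub_pos.2 ha))
    (F := fun t x => ⟪x - (a + t • v), v⟫ * (‖x - (a + t • v)‖ ^ 2) ^ (-(m + 1)))
    (F' := fun t x => 2 * (m + 1) * ⟪x - (a + t • v), v⟫ ^ 2 *
      (‖x - (a + t • v)‖ ^ 2) ^ (-(m + 1 + 1)) - (‖x - (a + t • v)‖ ^ 2) ^ (-(m + 1)))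
    (fun t ht => inner_mul_pole_mem hm (one_lt_norm_add_smul ha hv ht) hv)
    (fun t ht x hx => hasDerivAt_inner_mul_norm_sub_sq_rpow (m + 1)
      (ne_of_mem_closedBall_of_one_lt_norm hx (one_lt_norm_add_smul ha hv ht)) hv)
    ((ContinuousOn.mul (by fun_prop) (continuousOn_norm_sub_sq_rpow _ ha hv)).sub
      (continuousOn_norm_sub_sq_rpow _ ha hv))
  simpa only [zero_smul, add_zero] using h

-- The Laplacian in `a` of `‖x - a‖ ^ (-2m)` is a nonzero multiple of `‖x - a‖ ^ (-2(m + 1))`.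
theorem poleSpan_add_one_le (hm : m ≠ 0) (hmd : (finrank ℝ E : ℝ) ≠ 2 * (m + 1)) :
    poleSpan E (m + 1) ≤ uniformClosureOn (poleSpan E m) (closedBall 0 1) := by
  refine Submodule.span_le.2 ?_
  rintro _ ⟨a, ha, rfl⟩
  set b := stdOrthonormalBasis ℝ E
  have laplacian := Submodule.sum_mem _
    (fun i (_ : i ∈ Finset.univ) => inner_sq_mul_pole_sub_pole_mem hm ha (b.norm_eq_one i))
  refine mem_uniformClosureOn_congr (fun x hx => ?_)
    (Submodule.smul_mem _ (2 * (m + 1) - (finrank ℝ E : ℝ))⁻¹ laplacian)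
  have hpos : ‖x - a‖ ^ 2 ≠ 0 :=
    pow_ne_zero 2 (norm_ne_zero_iff.2 (sub_ne_zero.2 (ne_of_mem_closedBall_of_one_lt_norm hx ha)))
  have hpow : ‖x - a‖ ^ 2 * (‖x - a‖ ^ 2) ^ (-(m + 1 + 1)) = (‖x - a‖ ^ 2) ^ (-(m + 1)) := by
    rw [neg_add (m + 1), ← sub_eq_add_neg, Real.rpow_sub_one hpos, mul_div_cancel₀ _ hpos]
  have hc : 2 * (m + 1) - (finrank ℝ E : ℝ) ≠ 0 := sub_ne_zero.2 hmd.symm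
  simp only [Pi.smul_apply, Finset.sum_apply, smul_eq_mul]
  rw [Finset.sum_sub_distrib, ← Finset.sum_mul, ← Finset.mul_sum, b.sum_sq_inner_left, mul_assoc,
    hpow, Finset.sum_const, Finset.card_univ, Fintype.card_fin, nsmul_eq_mul, ← sub_mul,
    inv_mul_cancel_left₀ hc]

theorem poleSpan_add_nat_le (hm : 0 < m) (hmd : (finrank ℝ E : ℝ) < 2 * (m + 1)) (k : ℕ) :
    poleSpan E (m + k) ≤ uniformClosureOn (poleSpan E m) (closedBall 0 1) := by
  induction k with
  | zero => simpa using le_uniformClosureOn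
  | succ k ih =>
    have : (0 : ℝ) ≤ k := k.cast_nonneg
    rw [Nat.cast_succ, ← add_assoc]
    exact (poleSpan_add_one_le (by linarith) (by linarith)).trans
      (uniformClosureOn_le_uniformClosureOn ih)

theorem polynomial_mul_pole_mem (hm : 0 < m) (hmd : (finrank ℝ E : ℝ) < 2 * (m + 1))
    (ha : 1 < ‖a‖) (p : Polynomial ℝ) :
    (fun x => p.eval (‖x - a‖ ^ 2)⁻¹ * (‖x - a‖ ^ 2) ^ (-m)) ∈
      uniformClosureOn (poleSpan E m) (closedBall 0 1) := by
  have hsum := Submodule.sum_mem _ fun k (_ : k ∈ Finset.range (p.natDegree + 1)) =>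
    Submodule.smul_mem _ (p.coeff k)
      (poleSpan_add_nat_le hm hmd k (pole_mem_poleSpan (m + k) ha))
  refine mem_uniformClosureOn_congr (fun x hx => ?_) hsum
  have hpos : 0 < ‖x - a‖ ^ 2 := pow_pos (norm_pos_iff.2
    (sub_ne_zero.2 (ne_of_mem_closedBall_of_one_lt_norm hx ha))) 2
  simp only [Finset.sum_apply, Pi.smul_apply, smul_eq_mul, p.eval_eq_sum_range, Finset.sum_mul]
  refine Finset.sum_congr rfl fun k _ => ?_
  rw [neg_add, Real.rpow_add hpos, Real.rpow_neg hpos.le (k : ℝ), Real.rpow_natCast, inv_pow]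
  ring

/-- By Weierstrass approximation in the variable `‖x - a‖ ^ (-2)`. -/
theorem radial_mem_uniformClosureOn_poleSpan (hm : 0 < m)
    (hmd : (finrank ℝ E : ℝ) < 2 * (m + 1)) (ha : 1 < ‖a‖) {h : ℝ → ℝ}
    (hh : ContinuousOn h (Ioi 0)) :
    (fun x => h (‖x - a‖ ^ 2)) ∈ uniformClosureOn (poleSpan E m) (closedBall 0 1) := by
  refine mem_uniformClosureOn_of_forall_exists fun η hη => ?_
  have : 0 < ‖a‖ - 1 := sub_pos.2 ha
  have hc : 0 < ((‖a‖ - 1) ^ 2) ^ (-m) := by positivity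
  have hcont : ContinuousOn (fun y : ℝ => h y⁻¹ * y⁻¹ ^ m)
      (Icc ((‖a‖ + 1) ^ 2)⁻¹ ((‖a‖ - 1) ^ 2)⁻¹) := by
    have hpos : ∀ y ∈ Icc ((‖a‖ + 1) ^ 2)⁻¹ ((‖a‖ - 1) ^ 2)⁻¹, 0 < y := fun y hy =>
      (by positivity : 0 < ((‖a‖ + 1) ^ 2)⁻¹).trans_le hy.1
    have hinv := continuousOn_inv₀.mono fun y hy => (hpos y hy).ne'
    exact (hh.comp hinv fun y hy => inv_pos.2 (hpos y hy)).mul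
      (hinv.rpow_const fun _ _ => Or.inr hm.le)
  obtain ⟨p, hp⟩ := exists_polynomial_near_of_continuousOn _ _ _ hcont
    (η / ((‖a‖ - 1) ^ 2) ^ (-m)) (by positivity)
  refine ⟨_, polynomial_mul_pole_mem hm hmd ha p, fun x hx => ?_⟩
  obtain ⟨lower, upper⟩ := norm_sub_sq_mem_Icc hx ha
  have hpos : 0 < ‖x - a‖ ^ 2 := (by positivity : 0 < (‖a‖ - 1) ^ 2).trans_le lower
  have happrox := hp (‖x - a‖ ^ 2)⁻¹
    ⟨inv_anti₀ hpos upper, inv_anti₀ (by positivity) lower⟩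
  rw [inv_inv, abs_sub_comm] at happrox
  have hcancel : (‖x - a‖ ^ 2) ^ m * (‖x - a‖ ^ 2) ^ (-m) = 1 := by
    rw [← Real.rpow_add hpos, add_neg_cancel, Real.rpow_zero]
  calc |h (‖x - a‖ ^ 2) - p.eval (‖x - a‖ ^ 2)⁻¹ * (‖x - a‖ ^ 2) ^ (-m)|
      = |h (‖x - a‖ ^ 2) * (‖x - a‖ ^ 2) ^ m - p.eval (‖x - a‖ ^ 2)⁻¹| *
          (‖x - a‖ ^ 2) ^ (-m) := by
        rw [← abs_of_pos (Real.rpow_pos_of_pos hpos (-m)), ← abs_mul,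
          abs_of_pos (Real.rpow_pos_of_pos hpos (-m)), sub_mul, mul_assoc, hcancel, mul_one]
    _ ≤ η / ((‖a‖ - 1) ^ 2) ^ (-m) * ((‖a‖ - 1) ^ 2) ^ (-m) :=
        mul_le_mul happrox.le (Real.rpow_le_rpow_of_nonpos (by positivity) lower (by linarith))
          (by positivity) (by positivity)
    _ = η := div_mul_cancel₀ _ hc.ne'

end PoleDensity

section ExpDensity

variable {E : Type*} [NormedAddCommGroup E] [InnerProductSpace ℝ E]

theorem abs_exp_inner_sub_gaussian_le {p x : E} {t : ℝ} (hx : ‖x‖ ≤ 1) (ht : t ∈ Ioc 0 1) :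
    |Real.exp ⟪x, p⟫ - Real.exp (t * ‖(2 * t)⁻¹ • p‖ ^ 2) *
      Real.exp (-t * ‖x - (2 * t)⁻¹ • p‖ ^ 2)| ≤ Real.exp ‖p‖ * (2 * t) := by
  have ht0 := ht.1
  have complete_square : t * ‖(2 * t)⁻¹ • p‖ ^ 2 + -t * ‖x - (2 * t)⁻¹ • p‖ ^ 2 =
      ⟪x, p⟫ + -(t * ‖x‖ ^ 2) := by
    rw [norm_sub_sq_real, inner_smul_right]
    field_simp
    ring
  have hx2 : ‖x‖ ^ 2 ≤ 1 := pow_le_one₀ (norm_nonneg x) hx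
  have htx : |-(t * ‖x‖ ^ 2)| ≤ t := by
    rw [abs_neg, abs_of_nonneg (by positivity)]
    exact mul_le_of_le_one_right ht0.le hx2
  have hinner : ⟪x, p⟫ ≤ ‖p‖ :=
    (real_inner_le_norm x p).trans (mul_le_of_le_one_left (norm_nonneg p) hx)
  rw [← Real.exp_add, complete_square, Real.exp_add, ← mul_one_sub, abs_mul, Real.abs_exp,
    abs_sub_comm]
  gcongr
  exact (Real.abs_exp_sub_one_le (htx.trans ht.2)).trans (by gcongr)

theorem exp_inner_mem_uniformClosureOn_poleSpan [FiniteDimensional ℝ E] [Nontrivial E] {m : ℝ}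
    (hm : 0 < m) (hmd : (finrank ℝ E : ℝ) < 2 * (m + 1)) (p : E) :
    (fun x => Real.exp ⟪x, p⟫) ∈ uniformClosureOn (poleSpan E m) (closedBall 0 1) := by
  rcases eq_or_ne p 0 with rfl | hp
  · obtain ⟨a, ha⟩ := exists_norm_eq E (zero_le_two (α := ℝ))
    simpa using radial_mem_uniformClosureOn_poleSpan hm hmd (one_lt_two.trans_eq ha.symm)
      (continuousOn_const (c := (1 : ℝ)))
  have : 0 < ‖p‖ := norm_pos_iff.2 hp
  refine mem_uniformClosureOn_of_forall_exists fun η hη => ?_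
  obtain ⟨t, ht0, ht⟩ : ∃ t, 0 < t ∧ t < min 1 (min (‖p‖ / 2) (η / (2 * Real.exp ‖p‖))) :=
    exists_between (by positivity)
  simp only [lt_inf_iff] at ht
  obtain ⟨ht1, htp, htη⟩ := ht
  have ha : 1 < ‖(2 * t)⁻¹ • p‖ := by
    rw [norm_smul, Real.norm_of_nonneg (by positivity), inv_mul_eq_div, one_lt_div (by positivity)]
    linarith
  refine ⟨_, Submodule.smul_mem _ (Real.exp (t * ‖(2 * t)⁻¹ • p‖ ^ 2))
    (radial_mem_uniformClosureOn_poleSpan hm hmd ha (h := fun r => Real.exp (-t * r))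
      (by fun_prop)), fun x hx => ?_⟩
  refine (abs_exp_inner_sub_gaussian_le (mem_closedBall_zero_iff.1 hx) ⟨ht0, ht1.le⟩).trans ?_
  rw [lt_div_iff₀ (by positivity)] at htη
  linarith

/-- The exponentials `x ↦ exp ⟪x, p⟫` restricted to `K`, as a homomorphism in `p`: its range spans
the algebra to which Stone-Weierstrass is applied. -/
noncomputable def expInnerHom (K : Set E) : Multiplicative E →* C(K, ℝ) where
  toFun p := ⟨fun x => Real.exp ⟪(x : E), p.toAdd⟫, by fun_prop⟩
  map_one' := by ext x; simp
  map_mul' p q := by ext x; simp [inner_add_right, Real.exp_add]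

theorem expInnerHom_apply (K : Set E) (p : Multiplicative E) (x : K) :
    expInnerHom K p x = Real.exp ⟪(x : E), p.toAdd⟫ := rfl

theorem separatesPoints_adjoin_expInnerHom (K : Set E) :
    (Algebra.adjoin ℝ (MonoidHom.mrange (expInnerHom K) : Set C(K, ℝ))).SeparatesPoints := by
  intro x y hxy
  refine ⟨_, ⟨expInnerHom K (.ofAdd ((x : E) - y)), Algebra.subset_adjoin ⟨_, rfl⟩, rfl⟩,
    fun heq => hxy ?_⟩
  simp only [expInnerHom_apply] at heq
  have hinner : ⟪(x : E), (x : E) - y⟫ = ⟪(y : E), (x : E) - y⟫ := Real.exp_injective heq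
  rw [← sub_eq_zero, ← inner_sub_left, inner_self_eq_zero, sub_eq_zero] at hinner
  exact Subtype.ext hinner

variable {S : Submodule ℝ (E → ℝ)} {K : Set E}

theorem exists_eq_of_mem_adjoin_expInnerHom
    (h : ∀ p : E, (fun x => Real.exp ⟪x, p⟫) ∈ uniformClosureOn S K) {g : C(K, ℝ)}
    (hg : g ∈ Algebra.adjoin ℝ (MonoidHom.mrange (expInnerHom K) : Set C(K, ℝ))) :
    ∃ G ∈ uniformClosureOn S K, ∀ x : K, g x = G x := by
  rw [← Subalgebra.mem_toSubmodule, Algebra.adjoin_eq_span, Submonoid.closure_eq] at hg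
  induction hg using Submodule.span_induction with
  | mem g hg =>
    obtain ⟨p, rfl⟩ := hg
    exact ⟨_, h p.toAdd, fun x => expInnerHom_apply K p x⟩
  | zero => exact ⟨0, Submodule.zero_mem _, fun x => rfl⟩
  | add g g' _ _ hg hg' =>
    obtain ⟨G, hG, hgG⟩ := hg
    obtain ⟨G', hG', hgG'⟩ := hg'
    exact ⟨G + G', Submodule.add_mem _ hG hG', fun x => by simp [hgG, hgG']⟩
  | smul c g _ hg =>
    obtain ⟨G, hG, hgG⟩ := hg
    exact ⟨c • G, Submodule.smul_mem _ c hG, fun x => by simp [hgG]⟩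

theorem mem_uniformClosureOn_of_exp_inner_mem (hK : IsCompact K)
    (h : ∀ p : E, (fun x => Real.exp ⟪x, p⟫) ∈ uniformClosureOn S K)
    {f : E → ℝ} (hf : ContinuousOn f K) : f ∈ uniformClosureOn S K := by
  have : CompactSpace K := isCompact_iff_compactSpace.1 hK
  refine mem_uniformClosureOn_of_forall_exists fun η hη => ?_
  obtain ⟨⟨g, hgA⟩, hg⟩ :=
    ContinuousMap.exists_mem_subalgebra_near_continuous_of_separatesPoints _
      (separatesPoints_adjoin_expInnerHom K) (K.domRestrict f) hf.domRestrict η hη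
  obtain ⟨G, hG, hgG⟩ := exists_eq_of_mem_adjoin_expInnerHom h hgA
  refine ⟨G, hG, fun x hx => ?_⟩
  have hnear : ‖g ⟨x, hx⟩ - f x‖ < η := hg ⟨x, hx⟩
  rw [hgG, Real.norm_eq_abs, abs_sub_comm] at hnear
  exact hnear.le

theorem mem_uniformClosureOn_poleSpan [FiniteDimensional ℝ E] [Nontrivial E] {m : ℝ}
    (hm : 0 < m) (hmd : (finrank ℝ E : ℝ) < 2 * (m + 1)) {f : E → ℝ}
    (hf : ContinuousOn f (closedBall 0 1)) :
    f ∈ uniformClosureOn (poleSpan E m) (closedBall 0 1) :=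
  mem_uniformClosureOn_of_exp_inner_mem (isCompact_closedBall _ _)
    (exp_inner_mem_uniformClosureOn_poleSpan hm hmd) hf

end ExpDensity

section BoundaryTrace

theorem tendsto_of_forall_exists_tendsto_abs_sub_le {X : Type*} {l : Filter X} {h : X → ℝ}
    {ℓ A : ℝ} (H : ∀ η > 0, ∃ (F : X → ℝ) (L : ℝ), Tendsto F l (𝓝 L) ∧
      (∀ᶠ x in l, |h x - F x| ≤ A * η) ∧ |L - ℓ| ≤ A * η) : Tendsto h l (𝓝 ℓ) := by
  refine Metric.tendsto_nhds.2 fun δ hδ => ?_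
  obtain ⟨η, hη, hAη⟩ : ∃ η > 0, A * η < δ / 3 := by
    refine ⟨δ / 3 / (|A| + 1), by positivity, ?_⟩
    rw [mul_div_left_comm]
    exact mul_lt_of_lt_one_right (by positivity)
      ((div_lt_one (by positivity)).2 ((le_abs_self A).trans_lt (lt_add_one _)))
  obtain ⟨F, L, hF, hhF, hL⟩ := H η hη
  filter_upwards [hhF, Metric.tendsto_nhds.1 hF (δ / 3) (by positivity)] with x hx hFx
  calc dist (h x) ℓ ≤ dist (h x) (F x) + dist (F x) L + dist L ℓ := dist_triangle4 _ _ _ _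
    _ < δ / 3 + δ / 3 + δ / 3 := by
      gcongr
      exacts [hx.trans_lt hAη, hL.trans_lt hAη]
    _ = δ := by ring

section PoissonPairing

variable {E : Type*} [NormedAddCommGroup E] [InnerProductSpace ℝ E] [FiniteDimensional ℝ E]
  [MeasurableSpace E] [BorelSpace E] {s η : ℝ} {e : E} {f g : E → ℝ}

theorem integrable_ballProfile_mul [Nontrivial E] (hs : 0 < s) (he : ‖e‖ = 1)
    (hf : ContinuousOn f (closedBall 0 1)) : Integrable (fun z => ballProfile s e z * f z) := by
  have hoff : ∀ z ∉ closedBall (0 : E) 1, ballProfile s e z * f z = 0 := fun z hz => by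
    rw [ballProfile_of_one_le_norm hs.ne' e (not_le.1 (mem_closedBall_zero_iff.not.1 hz)).le,
      zero_mul]
  obtain ⟨M, hM⟩ := (isCompact_closedBall (0 : E) 1).exists_bound_of_continuousOn hf
  rw [← integrableOn_iff_integrable_of_support_subset
    (Function.support_subset_iff'.2 hoff)]
  exact (integrable_ballProfile hs he).integrableOn.mul_bdd (c := M)
    (hf.aestronglyMeasurable measurableSet_closedBall)
    (ae_restrict_of_forall_mem measurableSet_closedBall hM)

theorem abs_integral_ballProfile_mul_sub_le [Nontrivial E] (hs : 0 < s) (he : ‖e‖ = 1)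
    (hf : ContinuousOn f (closedBall 0 1)) (hg : ContinuousOn g (closedBall 0 1))
    (hfg : ∀ x ∈ closedBall 0 1, |f x - g x| ≤ η) :
    |(∫ z, ballProfile s e z * g z) - ∫ z, ballProfile s e z * f z| ≤
      (∫ z, ballProfile s e z) * η := by
  rw [abs_sub_comm, ← integral_sub (integrable_ballProfile_mul hs he hf)
    (integrable_ballProfile_mul hs he hg), ← integral_mul_const, ← Real.norm_eq_abs]
  refine norm_integral_le_of_norm_le ((integrable_ballProfile hs he).mul_const η)
    (.of_forall fun z => ?_)
  rw [← mul_sub, norm_mul, Real.norm_of_nonneg (ballProfile_nonneg s e z)]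
  rcases le_total ‖z‖ 1 with hz | hz
  · exact mul_le_mul_of_nonneg_left (hfg z (mem_closedBall_zero_iff.2 hz))
      (ballProfile_nonneg s e z)
  · simp [ballProfile_of_one_le_norm hs.ne' e hz]

theorem setIntegral_ball_eq_integral_ballProfile_mul (hs : s ≠ 0) (e : E) (f : E → ℝ) :
    ∫ z in ball (0 : E) 1, f z * ((1 - ‖z‖ ^ 2) ^ s / (s * ‖z - e‖ ^ finrank ℝ E)) =
      s⁻¹ * ∫ z, ballProfile s e z * f z := by
  rw [← setIntegral_eq_integral_of_forall_compl_eq_zero (s := ball (0 : E) 1)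
    (f := fun z => ballProfile s e z * f z)
    (fun z hz => by rw [ballProfile_of_one_le_norm hs e (by simpa using hz), zero_mul]),
    ← integral_const_mul]
  refine setIntegral_congr_fun measurableSet_ball fun z hz => ?_
  rw [ballProfile_of_norm_lt (by simpa using hz), Real.rpow_neg (norm_nonneg _),
    Real.rpow_natCast, div_eq_mul_inv, mul_inv]
  ring

end PoissonPairing

variable {n : ℕ} {s : ℝ} {e : EuclideanSpace ℝ (Fin n)}
  {f g u : EuclideanSpace ℝ (Fin n) → ℝ}

theorem tendsto_ballProfile_div_rpow (s : ℝ) {a : EuclideanSpace ℝ (Fin n)} (hea : e ≠ a) :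
    Tendsto (fun x => ballProfile s a x / (1 - ‖x‖ ^ 2) ^ s) (𝓝[ball 0 1] e)
      (𝓝 (‖e - a‖ ^ (-(n : ℝ)))) := by
  have hcont : ContinuousAt (fun x => ‖x - a‖ ^ (-(n : ℝ))) e :=
    ContinuousAt.rpow_const (by fun_prop) (Or.inl (norm_ne_zero_iff.2 (sub_ne_zero.2 hea)))
  refine (hcont.tendsto.mono_left nhdsWithin_le_nhds).congr' ?_
  filter_upwards [self_mem_nhdsWithin] with x hx
  have hx1 := mem_ball_zero_iff.1 hx
  rw [ballProfile_of_norm_lt hx1, finrank_euclideanSpace_fin,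
    mul_div_cancel_left₀ _ (Real.rpow_pos_of_pos (one_sub_norm_sq_pos hx1) s).ne']

theorem exists_solvesDirichlet_of_mem_poleSpan [NeZero n] (hs : s ∈ Ioo 0 1) (he : ‖e‖ = 1)
    (hg : g ∈ poleSpan (EuclideanSpace ℝ (Fin n)) ((n : ℝ) / 2 + s)) :
    ∃ v, SolvesDirichlet n s g v ∧ ContinuousOn g (closedBall 0 1) ∧
      Tendsto (fun x => v x / (1 - ‖x‖ ^ 2) ^ s) (𝓝[ball 0 1] e)
        (𝓝 (kappaC n s / s * ∫ z, ballProfile s e z * g z)) := by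
  induction hg using Submodule.span_induction with
  | mem g hg =>
    obtain ⟨a, ha, rfl⟩ := hg
    have hexp : ∀ x : EuclideanSpace ℝ (Fin n), (‖x - a‖ ^ 2) ^ (-((n : ℝ) / 2 + s)) =
        ‖x - a‖ ^ (-((n : ℝ) + 2 * s)) := fun x => by
      rw [sq_rpow (norm_nonneg _)]
      ring_nf
    simp only [hexp]
    refine ⟨_, .inv_smul_ballProfile hs ha, fun x hx => ?_, ?_⟩
    · have hcont : ContinuousAt (fun y => ‖y - a‖ ^ (-((n : ℝ) + 2 * s))) x :=
        ContinuousAt.rpow_const (by fun_prop) (Or.inl (norm_ne_zero_iff.2 (sub_ne_zero.2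
          (ne_of_mem_closedBall_of_one_lt_norm hx ha))))
      exact hcont.continuousWithinAt
    · rw [kappaC_div_mul_integral_ballProfile_mul hs ha he]
      simpa only [Pi.smul_apply, smul_eq_mul, mul_div_assoc] using
        (tendsto_ballProfile_div_rpow s (ne_of_mem_closedBall_of_one_lt_norm
          (mem_closedBall_zero_iff.2 he.le) ha)).const_mul _
  | zero =>
    refine ⟨0, ⟨continuous_const, fun _ _ => rfl, fun x _ => ?_⟩, continuousOn_const,
      by simpa using tendsto_const_nhds⟩
    simp [HasFracLap]
  | add g g' _ _ hg hg' =>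
    obtain ⟨v, hv, hgc, hlim⟩ := hg
    obtain ⟨v', hv', hgc', hlim'⟩ := hg'
    refine ⟨v + v', hv.add hs.1 hv', hgc.add hgc', ?_⟩
    simp only [Pi.add_apply, mul_add, add_div]
    rw [integral_add (integrable_ballProfile_mul hs.1 he hgc)
      (integrable_ballProfile_mul hs.1 he hgc'), mul_add]
    exact hlim.add hlim'
  | smul c g _ hg =>
    obtain ⟨v, hv, hgc, hlim⟩ := hg
    refine ⟨c • v, hv.const_smul c, hgc.const_smul c, ?_⟩
    simp only [Pi.smul_apply, smul_eq_mul, mul_left_comm _ c, mul_div_assoc, integral_const_mul]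
    exact hlim.const_mul c

theorem SolvesDirichlet.exists_abs_div_sub_div_le [NeZero n] (hs : s ∈ Ioo 0 1)
    (hu : SolvesDirichlet n s f u) : ∃ C > 0, ∀ (g v : EuclideanSpace ℝ (Fin n) → ℝ) (η : ℝ),
      0 < η → SolvesDirichlet n s g v → (∀ x ∈ closedBall 0 1, |f x - g x| ≤ η) →
      ∀ x ∈ ball 0 1, |u x / (1 - ‖x‖ ^ 2) ^ s - v x / (1 - ‖x‖ ^ 2) ^ s| ≤ C * η := by
  obtain ⟨C, hC0, hC⟩ := exists_abs_le_mul_rpow n hs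
  refine ⟨C, hC0, fun g v η hη hv hfg x hx => ?_⟩
  have hpos := one_sub_norm_sq_pos (mem_ball_zero_iff.1 hx)
  have h := hC _ _ η hη (hu.sub hs.1 hv) (fun y hy => hfg y (ball_subset_closedBall hy)) x
  rw [max_eq_left hpos.le] at h
  rwa [← sub_div, abs_div, abs_of_pos (Real.rpow_pos_of_pos hpos s),
    div_le_iff₀ (Real.rpow_pos_of_pos hpos s)]

theorem solution_boundary_asymptotics_general (hs : s ∈ Ioo 0 1) (he : ‖e‖ = 1)
    (hf : ContinuousOn f (closedBall 0 1)) (hu : SolvesDirichlet n s f u) :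
    Tendsto (fun x => u x / (1 - ‖x‖ ^ 2) ^ s) (𝓝[ball 0 1] e)
      (𝓝 (kappaC n s * ∫ z in ball (0 : EuclideanSpace ℝ (Fin n)) 1,
        f z * ((1 - ‖z‖ ^ 2) ^ s / (s * ‖z - e‖ ^ n)))) := by
  have : NeZero n := ⟨by rintro rfl; simp [Subsingleton.elim e 0] at he⟩
  have hs0 := hs.1
  have hlimit := setIntegral_ball_eq_integral_ballProfile_mul hs0.ne' e f
  rw [finrank_euclideanSpace_fin] at hlimit
  rw [hlimit, ← mul_assoc, ← div_eq_mul_inv]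
  obtain ⟨C, hC0, hC⟩ := hu.exists_abs_div_sub_div_le hs
  set D := |kappaC n s / s| * ∫ z, ballProfile s e z with hD
  have hD0 : 0 ≤ D := mul_nonneg (abs_nonneg _) (integral_nonneg (ballProfile_nonneg s e))
  refine tendsto_of_forall_exists_tendsto_abs_sub_le (A := C + D) fun η hη => ?_
  obtain ⟨g, hg, hfg⟩ := mem_uniformClosureOn_poleSpan (m := (n : ℝ) / 2 + s) (by positivity)
    (by rw [finrank_euclideanSpace_fin]; linarith) hf η hη
  obtain ⟨v, hv, hgc, hlim⟩ := exists_solvesDirichlet_of_mem_poleSpan hs he hg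
  refine ⟨_, _, hlim, ?_, ?_⟩
  · filter_upwards [self_mem_nhdsWithin] with x hx
    exact (hC g v η hη hv hfg x hx).trans (by gcongr; linarith)
  · rw [← mul_sub, abs_mul]
    calc _ ≤ |kappaC n s / s| * ((∫ z, ballProfile s e z) * η) := by
          gcongr
          exact abs_integral_ballProfile_mul_sub_le hs0 he hf hgc hfg
      _ = D * η := by rw [hD, mul_assoc]
      _ ≤ (C + D) * η := by gcongr; linarith

end BoundaryTrace

section Ray

variable {E : Type*} [NormedAddCommGroup E] [InnerProductSpace ℝ E] {e ω : E} {s εo ℓ : ℝ}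

theorem one_sub_norm_add_smul_sq (he : ‖e‖ = 1) (hω : ‖ω‖ = 1) (ε : ℝ) :
    1 - ‖e + ε • ω‖ ^ 2 = ε * (-2 * ⟪e, ω⟫ - ε) := by
  rw [norm_add_sq_real, he, norm_smul, hω, inner_smul_right, mul_one, Real.norm_eq_abs, sq_abs]
  ring

theorem tendsto_rpow_neg_mul_of_tendsto_div_rpow (hs : 0 < s) (he : ‖e‖ = 1) (hω : ‖ω‖ = 1)
    (hεo : 0 < εo) (hin : ∀ ε ∈ Ioc 0 εo, e + ε • ω ∈ ball (0 : E) 1) {u : E → ℝ}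
    (hu : Tendsto (fun x => u x / (1 - ‖x‖ ^ 2) ^ s) (𝓝[ball 0 1] e) (𝓝 ℓ)) :
    Tendsto (fun ε : ℝ => ε ^ (-s) * u (e + ε • ω)) (𝓝[>] 0) (𝓝 ((-2 * ⟪e, ω⟫) ^ s * ℓ)) := by
  have ray : Tendsto (fun ε : ℝ => e + ε • ω) (𝓝[>] 0) (𝓝[ball 0 1] e) := by
    refine tendsto_nhdsWithin_iff.2 ⟨?_, mem_of_superset (Ioc_mem_nhdsGT hεo) hin⟩
    have : ContinuousAt (fun ε : ℝ => e + ε • ω) 0 := by fun_prop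
    simpa using this.tendsto.mono_left nhdsWithin_le_nhds
  have weight : Tendsto (fun ε : ℝ => (-2 * ⟪e, ω⟫ - ε) ^ s) (𝓝[>] 0)
      (𝓝 ((-2 * ⟪e, ω⟫) ^ s)) := by
    have : ContinuousAt (fun ε : ℝ => (-2 * ⟪e, ω⟫ - ε) ^ s) 0 :=
      ContinuousAt.rpow_const (by fun_prop) (Or.inr hs.le)
    simpa using this.tendsto.mono_left nhdsWithin_le_nhds
  refine (weight.mul (hu.comp ray)).congr' ?_
  filter_upwards [Ioc_mem_nhdsGT hεo] with ε hε
  have hε0 : 0 < ε := hε.1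
  have hball : 0 < ε * (-2 * ⟪e, ω⟫ - ε) :=
    one_sub_norm_add_smul_sq he hω ε ▸ one_sub_norm_sq_pos (mem_ball_zero_iff.1 (hin ε hε))
  have hinner : 0 < -2 * ⟪e, ω⟫ - ε := pos_of_mul_pos_right hball hε0.le
  have hpow := (Real.rpow_pos_of_pos hinner s).ne'
  rw [Function.comp_apply, one_sub_norm_add_smul_sq he hω, Real.mul_rpow hε0.le hinner.le,
    Real.rpow_neg hε0.le, mul_comm (ε ^ s), mul_div_assoc', mul_div_mul_left _ _ hpow,
    inv_mul_eq_div]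

end Ray

theorem continuous_of_abs_sub_le_mul_rpow {E : Type*} [SeminormedAddCommGroup E] {f : E → ℝ}
    {α C : ℝ} (hα : 0 < α) (hf : ∀ x y, |f x - f y| ≤ C * ‖x - y‖ ^ α) : Continuous f := by
  refine continuous_iff_continuousAt.2 fun x => ?_
  have modulus : Tendsto (fun y => C * ‖y - x‖ ^ α) (𝓝 x) (𝓝 (C * ‖x - x‖ ^ α)) :=
    ContinuousAt.mul continuousAt_const (ContinuousAt.rpow_const (by fun_prop) (Or.inr hα.le))
  rw [sub_self, norm_zero, Real.zero_rpow hα.ne', mul_zero] at modulus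
  exact tendsto_iff_dist_tendsto_zero.2 (squeeze_zero (fun _ => dist_nonneg) (hf · x) modulus)

/-- Boundary behavior of solutions of `(-Δ)^s u = f` in `B₁`, `u = 0` outside `B₁`:
`lim_{ε→0⁺} ε^{-s} u(e+εω) = κ(n,s) (-2 e·ω)^s ∫_{B₁} f(z) (1-|z|²)^s/(s|z-e|^n) dz`. -/
theorem solution_boundary_asymptotics
    (n : ℕ) (hn : 1 ≤ n) (s : ℝ) (hs : s ∈ Set.Ioo (0 : ℝ) 1)
    (α : ℝ) (hα : α ∈ Set.Ioo (0 : ℝ) 1)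
    (e ω : EuclideanSpace ℝ (Fin n)) (he : ‖e‖ = 1) (hω : ‖ω‖ = 1)
    (εo : ℝ) (hεo : 0 < εo)
    (hin : ∀ ε ∈ Set.Ioc (0 : ℝ) εo,
      e + ε • ω ∈ Metric.ball (0 : EuclideanSpace ℝ (Fin n)) 1)
    (f : EuclideanSpace ℝ (Fin n) → ℝ)
    (hfH : ∃ C : ℝ, ∀ x y : EuclideanSpace ℝ (Fin n), |f x - f y| ≤ C * ‖x - y‖ ^ α)
    (hfb : ∃ M : ℝ, ∀ x : EuclideanSpace ℝ (Fin n), |f x| ≤ M)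
    (hf0 : ∀ x ∉ Metric.ball (0 : EuclideanSpace ℝ (Fin n)) 1, f x = 0)
    (u : EuclideanSpace ℝ (Fin n) → ℝ) (hu : Continuous u)
    (hu0 : ∀ x ∉ Metric.ball (0 : EuclideanSpace ℝ (Fin n)) 1, u x = 0)
    (huf : ∀ x ∈ Metric.ball (0 : EuclideanSpace ℝ (Fin n)) 1, HasFracLap n s u x (f x)) :
    Tendsto (fun ε : ℝ => ε ^ (-s) * u (e + ε • ω))
      (nhdsWithin 0 (Set.Ioi 0))
      (nhds (kappaC n s * (-2 * ⟪e, ω⟫) ^ s *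
        ∫ z in Metric.ball (0 : EuclideanSpace ℝ (Fin n)) 1,
          f z * ((1 - ‖z‖ ^ 2) ^ s / (s * ‖z - e‖ ^ n)))) := by
  obtain ⟨C, hC⟩ := hfH
  rw [mul_right_comm, mul_comm]
  exact tendsto_rpow_neg_mul_of_tendsto_div_rpow hs.1 he hω hεo hin
    (solution_boundary_asymptotics_general hs he
      (continuous_of_abs_sub_le_mul_rpow hα.1 hC).continuousOn ⟨hu, hu0, huf⟩)
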